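/- For every integer s ≥ 0 and every K > 0 there exists C > 0 such that for all ε ∈ (0,1], all z₀, s₀ ∈ C^∞(D₀) with C¹-norms at most K, and all u ∈ C^∞(D₀): |u|~_s² ≤ C(‖u‖_s² + ‖u‖_{L^∞}²·(1 + ‖ε z₀‖_s² + ‖ε s₀‖_s²)) and ‖u‖_s² ≤ C(|u|~_s² + ‖u‖_{L^∞}²·(1 + ‖ε z₀‖_s² + ‖ε s₀‖_s²)). In particular the norms ‖·‖_s and |·|~_s are equivalent. -/

import Mathlib

open MeasureTheory

noncomputable section

/-- Partial derivative in coordinate `i` (0 = x, 1 = y, 2 = t) of a function on `ℝ × ℝ × ℝ`. -/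
def pd (i : Fin 3) (f : ℝ × ℝ × ℝ → ℝ) (p : ℝ × ℝ × ℝ) : ℝ :=
  if i = 0 then deriv (fun s => f (s, p.2.1, p.2.2)) p.1
  else if i = 1 then deriv (fun s => f (p.1, s, p.2.2)) p.2.1
  else deriv (fun s => f (p.1, p.2.1, s)) p.2.2

/-- The domain `D₀ = [−A₀, M] × ℝ × [0, 1]`. -/
def D0 (A₀ M : ℝ) : Set (ℝ × ℝ × ℝ) :=
  {p | p.1 ∈ Set.Icc (-A₀) M ∧ p.2.2 ∈ Set.Icc 0 1}

/-- One period cell `[−A₀, M] × [0, 2π] × [0, 1]` of `D₀`. -/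
def cell (A₀ M : ℝ) : Set (ℝ × ℝ × ℝ) :=
  {p | p.1 ∈ Set.Icc (-A₀) M ∧ p.2.1 ∈ Set.Icc 0 (2 * Real.pi) ∧ p.2.2 ∈ Set.Icc 0 1}

/-- `2π`-periodicity in the variable `y`. -/
def PerY (f : ℝ × ℝ × ℝ → ℝ) : Prop :=
  ∀ x y t : ℝ, f (x, y + 2 * Real.pi, t) = f (x, y, t)

/-- The field `Z = ∂_t + ε z₀ ∂_y`. -/
def Zop (ε : ℝ) (z0 : ℝ × ℝ × ℝ → ℝ) (f : ℝ × ℝ × ℝ → ℝ) (p : ℝ × ℝ × ℝ) : ℝ :=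
  pd 2 f p + ε * z0 p * pd 1 f p

/-- The field `S = ∂_x + ε s₀ ∂_t`. -/
def Sop (ε : ℝ) (s0 : ℝ × ℝ × ℝ → ℝ) (f : ℝ × ℝ × ℝ → ℝ) (p : ℝ × ℝ × ℝ) : ℝ :=
  pd 0 f p + ε * s0 p * pd 2 f p

/-- The three letters `Z`, `S`, `∂_y`. -/
def fieldLetter (ε : ℝ) (z0 s0 : ℝ × ℝ × ℝ → ℝ) (i : Fin 3) :
    (ℝ × ℝ × ℝ → ℝ) → ℝ × ℝ × ℝ → ℝ :=
  if i = 0 then Zop ε z0 else if i = 1 then Sop ε s0 else pd 1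

/-- Composition `T^w` of the fields along a word `w`. -/
def fieldComp (ε : ℝ) (z0 s0 : ℝ × ℝ × ℝ → ℝ) :
    {n : ℕ} → (Fin n → Fin 3) → (ℝ × ℝ × ℝ → ℝ) → ℝ × ℝ × ℝ → ℝ
  | 0, _, f => f
  | _ + 1, w, f => fieldLetter ε z0 s0 (w 0) (fieldComp ε z0 s0 (fun j => w j.succ) f)

/-- Composition `∂^w` of coordinate derivatives along a word `w`. -/
def pdComp : {n : ℕ} → (Fin n → Fin 3) → (ℝ × ℝ × ℝ → ℝ) → ℝ × ℝ × ℝ → ℝ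
  | 0, _, f => f
  | _ + 1, w, f => pd (w 0) (pdComp (fun j => w j.succ) f)

/-- Squared standard Sobolev norm `‖u‖_s²` on the period cell. -/
def cellSobSq (A₀ M : ℝ) (s : ℕ) (u : ℝ × ℝ × ℝ → ℝ) : ℝ :=
  ∑ i ∈ Finset.range (s + 1), ∑ w : Fin i → Fin 3,
    ∫ p in cell A₀ M, (pdComp w u p) ^ 2

/-- Squared field norm `|u|~_s²` on the period cell. -/
def cellFieldSq (A₀ M ε : ℝ) (z0 s0 : ℝ × ℝ × ℝ → ℝ) (s : ℕ) (u : ℝ × ℝ × ℝ → ℝ) : ℝ :=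
  ∑ i ∈ Finset.range (s + 1), ∑ w : Fin i → Fin 3,
    ∫ p in cell A₀ M, (fieldComp ε z0 s0 w u p) ^ 2

/-- Sup norm over the period cell. -/
def supCell (A₀ M : ℝ) (u : ℝ × ℝ × ℝ → ℝ) : ℝ :=
  sSup ((fun p => |u p|) '' cell A₀ M)

/-- `C¹`-bound by `K` on `D₀`. -/
def C1Bound (A₀ M K : ℝ) (f : ℝ × ℝ × ℝ → ℝ) : Prop :=
  ∀ p ∈ D0 A₀ M, |f p| ≤ K ∧ |pd 0 f p| ≤ K ∧ |pd 1 f p| ≤ K ∧ |pd 2 f p| ≤ K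

/-!
Expanding a word in the fields by the Leibniz rule makes derivatives of the coefficients
`c = ε z₀, ε s₀` multiply lower derivatives of `u`. Pointwise, if `|Dˡ c| ≲ Rˡ` for `1 ≤ l ≤ n`,
then the words of length `n` in the fields and the coordinate derivatives of order `n` control each
other up to `∑_{j<n} R^{n-j} |Dʲ u|`; the smallest such `R` is comparable to `∑_l |Dˡ c|^{1/l}`.

The Gagliardo–Nirenberg inequality `∫ |Dʲ f|^{2n/j} ≤ C ‖f‖_n²` for `|f| ≤ 1` gives
`∫ R^{2n} ≲ ∑ ‖c‖_n²` and, with Young's inequality applied to `u / ‖u‖_∞`,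
`∫ (R^{n-j} |Dʲ u|)² ≤ δ ‖u‖_n² + C ‖u‖_∞² ∫ R^{2n}`. A small `δ` is absorbed.

The Gagliardo–Nirenberg inequality is reduced by Fubini and an induction on the order to
`∫ |v'|^q ≲ ∫ |v|^p + ∫ (|v'| + |v''|)^r` on an interval. There `∫ |v'|^q` is integrated by parts
against a cutoff vanishing at one end, and the boundary term at the other end is cancelled by that
of `-3 v(x) + 4 v((x + α) / 2)`, which replaces the usual extension of `v` beyond the interval.
-/

open scoped ContDiff

local notation "ℝ³" => ℝ × ℝ × ℝ

/-! ### One-dimensional interpolation -/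

lemma hasDerivAt_abs_rpow_mul_self {s : ℝ} (hs : 0 < s) (x : ℝ) :
    HasDerivAt (fun y : ℝ => |y| ^ s * y) ((s + 1) * |x| ^ s) x := by
  have hcont : Continuous fun y : ℝ => |y| ^ s := continuous_abs.rpow_const fun _ => .inr hs.le
  have hne : ∀ y ≠ (0 : ℝ), HasDerivAt (fun y : ℝ => |y| ^ s * y) ((s + 1) * |y| ^ s) y := by
    intro y hy
    convert! ((hasDerivAt_abs hy).rpow_const (p := s) (.inl (abs_ne_zero.2 hy))).mul
      (hasDerivAt_id y) using 1
    rw [Real.rpow_sub_one (abs_ne_zero.2 hy), id]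
    have hsign : (SignType.sign y : ℝ) * y = |y| := sign_mul_self y
    field_simp
    linear_combination -s * hsign
  rcases eq_or_ne x 0 with rfl | hx
  · exact hasDerivAt_of_hasDerivAt_of_ne hne (hcont.mul continuous_id).continuousAt
      (hcont.const_mul (s + 1)).continuousAt
  · exact hne x hx

lemma add_rpow_le_two_rpow_mul {x y p : ℝ} (hx : 0 ≤ x) (hy : 0 ≤ y) (hp : 0 ≤ p) :
    (x + y) ^ p ≤ 2 ^ p * (x ^ p + y ^ p) := by
  have hmax : 0 ≤ max x y := le_max_of_le_left hx
  calc (x + y) ^ p ≤ (2 * max x y) ^ p :=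
        Real.rpow_le_rpow (by positivity) (by linarith [le_max_left x y, le_max_right x y]) hp
    _ = 2 ^ p * max (x ^ p) (y ^ p) := by
        rw [Real.mul_rpow zero_le_two hmax, (Real.monotoneOn_rpow_Ici_of_exponent_nonneg hp).map_max
          hx hy]
    _ ≤ 2 ^ p * (x ^ p + y ^ p) := by
        gcongr
        exact max_le_add_of_nonneg (by positivity) (by positivity)

lemma abs_mul_add_mul_le {a b c : ℝ} (ha : |a| ≤ c) (hb : |b| ≤ c) (x y : ℝ) :
    |a * x + b * y| ≤ c * (|x| + |y|) := by
  calc |a * x + b * y| ≤ |a| * |x| + |b| * |y| := by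
        simpa only [abs_mul] using abs_add_le (a * x) (b * y)
    _ ≤ c * |x| + c * |y| := by gcongr
    _ = c * (|x| + |y|) := by ring

lemma exists_mul_le_mul_rpow_add_mul_rpow {p q : ℝ} (h : p.HolderConjugate q) {δ : ℝ}
    (hδ : 0 < δ) :
    ∃ C : ℝ, 0 < C ∧ ∀ x y : ℝ, 0 ≤ x → 0 ≤ y → x * y ≤ δ * x ^ p + C * y ^ q := by
  have hp := h.pos
  have hq := h.symm.pos
  set l := (δ * p) ^ (1 / p) with hl
  have hl0 : 0 < l := by positivity
  have hlp : l ^ p = δ * p := by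
    rw [hl, ← Real.rpow_mul (by positivity), one_div_mul_cancel hp.ne', Real.rpow_one]
  refine ⟨(1 / l) ^ q / q, by positivity, fun x y hx hy => ?_⟩
  calc x * y = (l * x) * (1 / l * y) := by field_simp
    _ ≤ (l * x) ^ p / p + (1 / l * y) ^ q / q :=
        Real.young_inequality_of_nonneg (by positivity) (by positivity) h
    _ = δ * x ^ p + (1 / l) ^ q / q * y ^ q := by
        rw [Real.mul_rpow hl0.le hx, Real.mul_rpow (by positivity) hy, hlp]
        field_simp

lemma exists_forall_of_monotone {ι : Type*} (s : Finset ι) {P : ι → ℝ → Prop}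
    (hmono : ∀ i C C', C ≤ C' → P i C → P i C') (h : ∀ i ∈ s, ∃ C, P i C) :
    ∃ C : ℝ, 0 < C ∧ ∀ i ∈ s, P i C := by
  classical
  choose! C hC using h
  obtain ⟨B, hB⟩ := (s.image C).exists_le
  exact ⟨max B 1, by positivity, fun i hi => hmono i _ _
    ((hB _ (Finset.mem_image_of_mem C hi)).trans (le_max_left B 1)) (hC i hi)⟩

lemma continuous_and_deriv_and_deriv_deriv {w : ℝ → ℝ} (hw : ContDiff ℝ 2 w) :
    Continuous w ∧ Continuous (deriv w) ∧ Continuous (deriv (deriv w)) :=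
  ⟨hw.continuous, hw.continuous_deriv one_le_two, hw.deriv'.continuous_deriv le_rfl⟩

lemma weight_mul_abs_rpow_le {q φ κ : ℝ} (hq : 2 < q) (hφ : 0 ≤ φ) (hφ1 : φ ≤ 1) (hκ : 0 ≤ κ)
    (a b c : ℝ) :
    φ * |b| ^ q ≤ -κ * (a * (|b| ^ (q - 2) * b)) +
        φ * (b * (|b| ^ (q - 2) * b) + a * ((q - 1) * |b| ^ (q - 2) * c)) +
      (κ + (q - 1)) * (|a| * |b| ^ (q - 2) * (|b| + |c|)) := by
  have hsplit : |b| ^ q = b * (|b| ^ (q - 2) * b) := by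
    have := Real.rpow_sub_natCast' (abs_nonneg b) (y := q) (n := 2) (by push_cast; linarith)
    rcases eq_or_ne b 0 with rfl | hb
    · simp [Real.zero_rpow (by linarith : q ≠ 0)]
    · rw [show q - 2 = q - (2 : ℕ) by push_cast; rfl, this, sq_abs]
      field_simp
  rw [hsplit]
  set R := |b| ^ (q - 2)
  have hR0 : 0 ≤ R := by positivity
  have hfirst : κ * R * (a * b) ≤ κ * R * (|a| * |b|) := by
    rw [← abs_mul]; gcongr; exact le_abs_self _
  have hsecond : φ * ((q - 1) * R) * -(a * c) ≤ 1 * ((q - 1) * R) * (|a| * |c|) := by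
    have : 0 ≤ (q - 1) * R := mul_nonneg (by linarith) hR0
    calc φ * ((q - 1) * R) * -(a * c) ≤ φ * ((q - 1) * R) * |a * c| := by
          gcongr; exact neg_le_abs _
      _ ≤ 1 * ((q - 1) * R) * |a * c| := by gcongr
      _ = _ := by rw [abs_mul]
  have hb : 0 ≤ (q - 1) * (|a| * R * |b|) := mul_nonneg (by linarith) (by positivity)
  have hc : 0 ≤ κ * (|a| * R * |c|) := by positivity
  linarith

lemma hasDerivAt_weight_mul_flux {α β q : ℝ} (hq : 2 < q) {w : ℝ → ℝ} (hw : ContDiff ℝ 2 w)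
    (x : ℝ) :
    HasDerivAt (fun x => (β - x) / (β - α) * (w x * (|deriv w x| ^ (q - 2) * deriv w x)))
      (-(1 / (β - α)) * (w x * (|deriv w x| ^ (q - 2) * deriv w x)) +
        (β - x) / (β - α) * (deriv w x * (|deriv w x| ^ (q - 2) * deriv w x) +
          w x * ((q - 1) * |deriv w x| ^ (q - 2) * deriv (deriv w) x))) x := by
  have hweight : HasDerivAt (fun x => (β - x) / (β - α)) (-(1 / (β - α))) x :=
    (((hasDerivAt_id x).const_sub β).div_const (β - α)).congr_deriv (by ring)
  have hflux := (hasDerivAt_abs_rpow_mul_self (s := q - 2) (by linarith) (deriv w x)).comp x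
    (hw.deriv'.differentiable one_ne_zero x).hasDerivAt
  refine (hweight.mul ((hw.differentiable two_ne_zero x).hasDerivAt.mul hflux)).congr_deriv ?_
  simp only [Pi.mul_apply, Function.comp_apply]
  ring

lemma integral_weight_mul_abs_deriv_rpow_le {α β q : ℝ} (hαβ : α < β) (hq : 2 < q) {w : ℝ → ℝ}
    (hw : ContDiff ℝ 2 w) :
    ∫ x in α..β, (β - x) / (β - α) * |deriv w x| ^ q ≤
      -(w α * (|deriv w α| ^ (q - 2) * deriv w α)) + (1 / (β - α) + (q - 1)) *
        ∫ x in α..β, |w x| * |deriv w x| ^ (q - 2) * (|deriv w x| + |deriv (deriv w) x|) := by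
  have hd : 0 < β - α := sub_pos.2 hαβ
  obtain ⟨hwc, hwc', _⟩ := continuous_and_deriv_and_deriv_deriv hw
  have hR : Continuous fun x => |deriv w x| ^ (q - 2) :=
    hwc'.abs.rpow_const fun _ => .inr (by linarith)
  have hRq : Continuous fun x => |deriv w x| ^ q := hwc'.abs.rpow_const fun _ => .inr (by linarith)
  have hboundary := intervalIntegral.integral_eq_sub_of_hasDerivAt
    (a := α) (b := β)
    (fun x _ => hasDerivAt_weight_mul_flux (α := α) (β := β) hq hw x)
    (Continuous.intervalIntegrable (by fun_prop) _ _)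
  rw [sub_self, zero_div, zero_mul, zero_sub, div_self hd.ne', one_mul] at hboundary
  rw [← hboundary, ← intervalIntegral.integral_const_mul, ← intervalIntegral.integral_add
    (Continuous.intervalIntegrable (by fun_prop) _ _)
    (Continuous.intervalIntegrable (by fun_prop) _ _)]
  refine intervalIntegral.integral_mono_on hαβ.le (Continuous.intervalIntegrable (by fun_prop) _ _)
    (Continuous.intervalIntegrable (by fun_prop) _ _) fun x hx => ?_
  exact weight_mul_abs_rpow_le hq (div_nonneg (by linarith [hx.2]) hd.le)
    ((div_le_one hd).2 (by linarith [hx.1])) (by positivity) _ _ _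

/-- The Young-type bound `(ac)^{q/2} ≤ δ aᵖ + C cʳ` on `a ∈ [0, B]`, `c ≥ 0`. It is what the
interpolation of `∫ |v'|^q` between `v` and `v''` needs to know about the exponents. -/
def ProductBound (q p r δ C B : ℝ) : Prop :=
  ∀ a c : ℝ, 0 ≤ a → 0 ≤ c → a ≤ B → (a * c) ^ (q / 2) ≤ δ * a ^ p + C * c ^ r

lemma ProductBound.mono {q p r δ C B B' : ℝ} (h : ProductBound q p r δ C B') (hB : B ≤ B') :
    ProductBound q p r δ C B :=
  fun a c ha hc haB => h a c ha hc (haB.trans hB)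

lemma ProductBound.exists_mul_rpow_mul_le {q η : ℝ} (hq : 2 < q) (hη : 0 < η) :
    ∃ E : ℝ, 0 < E ∧ ∀ p r δ C B : ℝ, ProductBound q p r δ C B →
      ∀ a b c : ℝ, 0 ≤ a → 0 ≤ b → 0 ≤ c → a ≤ B →
        a * b ^ (q - 2) * c ≤ η * b ^ q + E * (δ * a ^ p + C * c ^ r) := by
  have hq2 : 0 < q - 2 := by linarith
  have hconj : (q / (q - 2)).HolderConjugate (q / 2) := by
    rw [Real.holderConjugate_iff]
    exact ⟨by rw [lt_div_iff₀ hq2]; linarith, by field_simp; ring⟩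
  obtain ⟨E, hE, hyoung⟩ := exists_mul_le_mul_rpow_add_mul_rpow hconj hη
  refine ⟨E, hE, fun p r δ C B h a b c ha hb hc hB => ?_⟩
  calc a * b ^ (q - 2) * c = b ^ (q - 2) * (a * c) := by ring
    _ ≤ η * (b ^ (q - 2)) ^ (q / (q - 2)) + E * (a * c) ^ (q / 2) :=
        hyoung _ _ (by positivity) (by positivity)
    _ ≤ η * b ^ q + E * (δ * a ^ p + C * c ^ r) := by
        rw [← Real.rpow_mul hb, mul_div_cancel₀ _ hq2.ne']
        gcongr
        exact h a c ha hc hB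

lemma ProductBound.exists_integral_bulk_le {α β q p r η : ℝ} (hαβ : α ≤ β) (hq : 2 < q)
    (hp : 0 ≤ p) (hr : 0 ≤ r) (hη : 0 < η) :
    ∃ E : ℝ, 0 < E ∧ ∀ δ C B : ℝ, ProductBound q p r δ C B →
      ∀ w : ℝ → ℝ, ContDiff ℝ 2 w → (∀ x ∈ Set.Icc α β, |w x| ≤ B) →
        ∫ x in α..β, |w x| * |deriv w x| ^ (q - 2) * (|deriv w x| + |deriv (deriv w) x|) ≤
          η * (∫ x in α..β, |deriv w x| ^ q) + E * (δ * (∫ x in α..β, |w x| ^ p) +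
            C * ∫ x in α..β, (|deriv w x| + |deriv (deriv w) x|) ^ r) := by
  obtain ⟨E, hE, hbulk⟩ := ProductBound.exists_mul_rpow_mul_le hq hη
  refine ⟨E, hE, fun δ C B h w hw hB => ?_⟩
  obtain ⟨hwc, hwc', hwc''⟩ := continuous_and_deriv_and_deriv_deriv hw
  have : Continuous fun x => |deriv w x| ^ (q - 2) :=
    hwc'.abs.rpow_const fun _ => .inr (by linarith)
  have : Continuous fun x => |deriv w x| ^ q := hwc'.abs.rpow_const fun _ => .inr (by linarith)
  have : Continuous fun x => |w x| ^ p := hwc.abs.rpow_const fun _ => .inr hp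
  have : Continuous fun x => (|deriv w x| + |deriv (deriv w) x|) ^ r :=
    (hwc'.abs.add hwc''.abs).rpow_const fun _ => .inr hr
  simp only [← intervalIntegral.integral_const_mul]
  rw [← intervalIntegral.integral_add (Continuous.intervalIntegrable (by fun_prop) _ _)
      (Continuous.intervalIntegrable (by fun_prop) _ _), ← intervalIntegral.integral_const_mul,
    ← intervalIntegral.integral_add (Continuous.intervalIntegrable (by fun_prop) _ _)
      (Continuous.intervalIntegrable (by fun_prop) _ _)]
  exact intervalIntegral.integral_mono_on hαβ (Continuous.intervalIntegrable (by fun_prop) _ _)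
    (Continuous.intervalIntegrable (by fun_prop) _ _) fun x hx =>
      hbulk p r δ C B h _ _ _ (abs_nonneg _) (abs_nonneg _) (by positivity) (hB x hx)

lemma integral_comp_midpoint_le {α β : ℝ} (hαβ : α ≤ β) {h : ℝ → ℝ} (hc : Continuous h)
    (h0 : ∀ x, 0 ≤ h x) :
    ∫ x in α..β, h ((x + α) / 2) ≤ 2 * ∫ x in α..β, h x := by
  have hsubst := intervalIntegral.integral_comp_div_add (a := α) (b := β) h (c := 2) two_ne_zero
    (α / 2)
  simp only [← add_div, smul_eq_mul] at hsubst
  rw [hsubst, add_self_div_two]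
  gcongr
  exact intervalIntegral.integral_mono_interval le_rfl (by linarith) (by linarith)
    (.of_forall h0) (hc.intervalIntegrable _ _)

lemma integral_rpow_le_of_le_midpoint {α β e : ℝ} (hαβ : α ≤ β) (he : 0 ≤ e) {g G : ℝ → ℝ}
    (hg : Continuous g) (hG : Continuous G) (hg0 : ∀ x, 0 ≤ g x) (hG0 : ∀ x, 0 ≤ G x)
    (h : ∀ x, G x ≤ 4 * (g x + g ((x + α) / 2))) :
    ∫ x in α..β, G x ^ e ≤ 3 * 8 ^ e * ∫ x in α..β, g x ^ e := by
  have hge : Continuous fun x => g x ^ e := hg.rpow_const fun _ => .inr he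
  have hmid : Continuous fun x => g ((x + α) / 2) ^ e :=
    hge.comp ((continuous_id.add_const α).div_const 2)
  have hGe : Continuous fun x => G x ^ e := hG.rpow_const fun _ => .inr he
  have hpt : ∀ x, G x ^ e ≤ 8 ^ e * (g x ^ e + g ((x + α) / 2) ^ e) := fun x => by
    calc G x ^ e ≤ (4 * (g x + g ((x + α) / 2))) ^ e := Real.rpow_le_rpow (hG0 x) (h x) he
      _ ≤ 4 ^ e * (2 ^ e * (g x ^ e + g ((x + α) / 2) ^ e)) := by
          rw [Real.mul_rpow (by norm_num) (add_nonneg (hg0 _) (hg0 _))]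
          gcongr
          exact add_rpow_le_two_rpow_mul (hg0 _) (hg0 _) he
      _ = 8 ^ e * (g x ^ e + g ((x + α) / 2) ^ e) := by
          rw [← mul_assoc, ← Real.mul_rpow (by norm_num) (by norm_num)]; norm_num
  calc ∫ x in α..β, G x ^ e ≤ ∫ x in α..β, 8 ^ e * (g x ^ e + g ((x + α) / 2) ^ e) :=
        intervalIntegral.integral_mono_on hαβ (hGe.intervalIntegrable _ _)
          (((hge.add hmid).const_mul _).intervalIntegrable _ _) fun x _ => hpt x
    _ = 8 ^ e * ((∫ x in α..β, g x ^ e) + ∫ x in α..β, g ((x + α) / 2) ^ e) := by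
        rw [intervalIntegral.integral_const_mul, intervalIntegral.integral_add
          (hge.intervalIntegrable _ _) (hmid.intervalIntegrable _ _)]
    _ ≤ 8 ^ e * ((∫ x in α..β, g x ^ e) + 2 * ∫ x in α..β, g x ^ e) := by
        gcongr
        exact integral_comp_midpoint_le hαβ hge fun x => Real.rpow_nonneg (hg0 x) e
    _ = 3 * 8 ^ e * ∫ x in α..β, g x ^ e := by ring

/-- The combination of `v` and its dilation about `α` with the same value as `v` and the opposite
derivative at `α`: the boundary terms of the two integrations by parts cancel. -/
def boundaryReflection (α : ℝ) (v : ℝ → ℝ) (x : ℝ) : ℝ :=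
  -3 * v x + 4 * v ((x + α) / 2)

lemma contDiff_boundaryReflection {n : ℕ∞} {α : ℝ} {v : ℝ → ℝ} (hv : ContDiff ℝ n v) :
    ContDiff ℝ n (boundaryReflection α v) := by
  unfold boundaryReflection
  fun_prop

lemma hasDerivAt_comp_midpoint {v : ℝ → ℝ} (hv : Differentiable ℝ v) (α x : ℝ) :
    HasDerivAt (fun x => v ((x + α) / 2)) (deriv v ((x + α) / 2) / 2) x :=
  ((hv _).hasDerivAt.comp x (((hasDerivAt_id' x).add_const α).div_const 2)).congr_deriv (by ring)

lemma deriv_boundaryReflection {v : ℝ → ℝ} (hv : Differentiable ℝ v) (α : ℝ) :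
    deriv (boundaryReflection α v) = fun x => -3 * deriv v x + 2 * deriv v ((x + α) / 2) :=
  funext fun x => ((((hv x).hasDerivAt.const_mul (-3)).add
    ((hasDerivAt_comp_midpoint hv α x).const_mul 4)).congr_deriv (by ring)).deriv

lemma deriv_deriv_boundaryReflection {v : ℝ → ℝ} (hv : ContDiff ℝ 2 v) (α : ℝ) :
    deriv (deriv (boundaryReflection α v)) =
      fun x => -3 * deriv (deriv v) x + deriv (deriv v) ((x + α) / 2) := by
  have hv' : Differentiable ℝ (deriv v) := hv.deriv'.differentiable one_ne_zero
  rw [deriv_boundaryReflection (hv.differentiable two_ne_zero)]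
  exact funext fun x => ((((hv' x).hasDerivAt.const_mul (-3)).add
    ((hasDerivAt_comp_midpoint hv' α x).const_mul 2)).congr_deriv (by ring)).deriv

lemma abs_boundaryReflection_le (α : ℝ) (v : ℝ → ℝ) (x : ℝ) :
    |boundaryReflection α v x| ≤ 4 * (|v x| + |v ((x + α) / 2)|) :=
  abs_mul_add_mul_le (by norm_num) (by norm_num) _ _

lemma abs_deriv_boundaryReflection_le {v : ℝ → ℝ} (hv : Differentiable ℝ v) (α x : ℝ) :
    |deriv (boundaryReflection α v) x| ≤ 4 * (|deriv v x| + |deriv v ((x + α) / 2)|) := by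
  rw [deriv_boundaryReflection hv]
  exact abs_mul_add_mul_le (by norm_num) (by norm_num) _ _

lemma abs_deriv_deriv_boundaryReflection_le {v : ℝ → ℝ} (hv : ContDiff ℝ 2 v) (α x : ℝ) :
    |deriv (deriv (boundaryReflection α v)) x| ≤
      4 * (|deriv (deriv v) x| + |deriv (deriv v) ((x + α) / 2)|) := by
  rw [deriv_deriv_boundaryReflection hv]
  simpa using abs_mul_add_mul_le (a := -3) (b := 1) (c := 4) (by norm_num) (by norm_num)
    (deriv (deriv v) x) (deriv (deriv v) ((x + α) / 2))

/-- Integrating by parts for `v` and for its boundary reflection, the boundary terms at `α` cancel,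
and the weighted integral of the reflection has the good sign. -/
lemma integral_weight_mul_abs_deriv_rpow_le_bulk {α β q : ℝ} (hαβ : α < β) (hq : 2 < q)
    {v : ℝ → ℝ} (hv : ContDiff ℝ 2 v) :
    ∫ x in α..β, (β - x) / (β - α) * |deriv v x| ^ q ≤ (1 / (β - α) + (q - 1)) *
      ((∫ x in α..β, |v x| * |deriv v x| ^ (q - 2) * (|deriv v x| + |deriv (deriv v) x|)) +
        ∫ x in α..β, |boundaryReflection α v x| * |deriv (boundaryReflection α v) x| ^ (q - 2) *
          (|deriv (boundaryReflection α v) x| + |deriv (deriv (boundaryReflection α v)) x|)) := by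
  have hvalue : boundaryReflection α v α = v α := by
    simp only [boundaryReflection, add_self_div_two]; ring
  have hslope : deriv (boundaryReflection α v) α = -deriv v α := by
    simp only [deriv_boundaryReflection (hv.differentiable two_ne_zero), add_self_div_two]; ring
  have hleft := integral_weight_mul_abs_deriv_rpow_le hαβ hq hv
  have hright := integral_weight_mul_abs_deriv_rpow_le hαβ hq
    (contDiff_boundaryReflection (n := 2) (α := α) hv)
  have hsign : 0 ≤ ∫ x in α..β, (β - x) / (β - α) * |deriv (boundaryReflection α v) x| ^ q :=
    intervalIntegral.integral_nonneg hαβ.le fun x hx =>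
      mul_nonneg (div_nonneg (by linarith [hx.2]) (by linarith)) (by positivity)
  rw [hvalue, hslope, abs_neg] at hright
  linarith

lemma ProductBound.exists_integral_bulk_boundaryReflection_le {α β q p r η : ℝ} (hαβ : α ≤ β)
    (hq : 2 < q) (hp : 0 ≤ p) (hr : 0 ≤ r) (hη : 0 < η) :
    ∃ E : ℝ, 0 < E ∧ ∀ δ C B : ℝ, 0 ≤ δ → 0 ≤ C → ProductBound q p r δ C (8 * B) →
      ∀ v : ℝ → ℝ, ContDiff ℝ 2 v → (∀ x ∈ Set.Icc α β, |v x| ≤ B) →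
        ∫ x in α..β, |boundaryReflection α v x| * |deriv (boundaryReflection α v) x| ^ (q - 2) *
            (|deriv (boundaryReflection α v) x| + |deriv (deriv (boundaryReflection α v)) x|) ≤
          η * (∫ x in α..β, |deriv v x| ^ q) + E * (δ * (∫ x in α..β, |v x| ^ p) +
            C * ∫ x in α..β, (|deriv v x| + |deriv (deriv v) x|) ^ r) := by
  obtain ⟨E, hE, hbulk⟩ := ProductBound.exists_integral_bulk_le hαβ hq hp hr
    (η := η / (3 * 8 ^ q)) (by positivity)
  refine ⟨E * (3 * 8 ^ p + 3 * 8 ^ r), by positivity, fun δ C B hδ hC h v hv hB => ?_⟩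
  have hF := contDiff_boundaryReflection (n := 2) (α := α) hv
  obtain ⟨hFc, hFc', hFc''⟩ := continuous_and_deriv_and_deriv_deriv hF
  obtain ⟨hvc, hvc', hvc''⟩ := continuous_and_deriv_and_deriv_deriv hv
  have hF1 := abs_deriv_boundaryReflection_le (hv.differentiable two_ne_zero) α
  have hFB : ∀ x ∈ Set.Icc α β, |boundaryReflection α v x| ≤ 8 * B := fun x hx => by
    have hmid : (x + α) / 2 ∈ Set.Icc α β := ⟨by linarith [hx.1], by linarith [hx.1, hx.2]⟩
    linarith [abs_boundaryReflection_le α v x, hB x hx, hB _ hmid]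
  have hq' := integral_rpow_le_of_le_midpoint hαβ (by linarith : 0 ≤ q) hvc'.abs hFc'.abs
    (fun _ => abs_nonneg _) (fun _ => abs_nonneg _) hF1
  have hp' := integral_rpow_le_of_le_midpoint hαβ hp hvc.abs hFc.abs
    (fun _ => abs_nonneg _) (fun _ => abs_nonneg _) (abs_boundaryReflection_le α v)
  have hr' := integral_rpow_le_of_le_midpoint hαβ hr
    (g := fun x => |deriv v x| + |deriv (deriv v) x|)
    (G := fun x => |deriv (boundaryReflection α v) x| + |deriv (deriv (boundaryReflection α v)) x|)
    (hvc'.abs.add hvc''.abs) (hFc'.abs.add hFc''.abs) (fun _ => by positivity)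
    (fun _ => by positivity)
    fun x => by linarith [hF1 x, abs_deriv_deriv_boundaryReflection_le hv α x]
  have hIp : 0 ≤ ∫ x in α..β, |v x| ^ p :=
    intervalIntegral.integral_nonneg hαβ fun _ _ => by positivity
  have hIr : 0 ≤ ∫ x in α..β, (|deriv v x| + |deriv (deriv v) x|) ^ r :=
    intervalIntegral.integral_nonneg hαβ fun _ _ => by positivity
  refine (hbulk δ C (8 * B) h _ hF hFB).trans ?_
  rw [mul_assoc E]
  refine add_le_add ((mul_le_mul_of_nonneg_left hq' (by positivity)).trans_eq (by field_simp))
    (mul_le_mul_of_nonneg_left ?_ hE.le)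
  calc _ ≤ δ * (3 * 8 ^ p * ∫ x in α..β, |v x| ^ p) +
        C * (3 * 8 ^ r * ∫ x in α..β, (|deriv v x| + |deriv (deriv v) x|) ^ r) := by gcongr
    _ ≤ δ * ((3 * 8 ^ p + 3 * 8 ^ r) * ∫ x in α..β, |v x| ^ p) + C * ((3 * 8 ^ p + 3 * 8 ^ r) *
        ∫ x in α..β, (|deriv v x| + |deriv (deriv v) x|) ^ r) := by
      gcongr
      · exact le_add_of_nonneg_right (by positivity)
      · exact le_add_of_nonneg_left (by positivity)
    _ = _ := by ring

/-- The unweighted `∫ |v'|^q` cannot be absorbed here: this takes the sum with the mirror image. -/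
lemma ProductBound.exists_integral_weight_mul_le {α β q p r η : ℝ} (hαβ : α < β) (hq : 2 < q)
    (hp : 0 ≤ p) (hr : 0 ≤ r) (hη : 0 < η) :
    ∃ E : ℝ, 0 < E ∧ ∀ δ C B : ℝ, 0 ≤ δ → 0 ≤ C → ProductBound q p r δ C (8 * B) →
      ∀ v : ℝ → ℝ, ContDiff ℝ 2 v → (∀ x ∈ Set.Icc α β, |v x| ≤ B) →
        ∫ x in α..β, (β - x) / (β - α) * |deriv v x| ^ q ≤
          η * (∫ x in α..β, |deriv v x| ^ q) + E * (δ * (∫ x in α..β, |v x| ^ p) +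
            C * ∫ x in α..β, (|deriv v x| + |deriv (deriv v) x|) ^ r) := by
  have hκ : 0 < 1 / (β - α) + (q - 1) :=
    add_pos (one_div_pos.2 (sub_pos.2 hαβ)) (by linarith)
  set κ := 1 / (β - α) + (q - 1)
  obtain ⟨E₁, hE₁, hv_le⟩ := ProductBound.exists_integral_bulk_le hαβ.le hq hp hr
    (η := η / (2 * κ)) (by positivity)
  obtain ⟨E₂, hE₂, hF_le⟩ := ProductBound.exists_integral_bulk_boundaryReflection_le hαβ.le hq hp
    hr (η := η / (2 * κ)) (by positivity)
  refine ⟨κ * (E₁ + E₂), by positivity, fun δ C B hδ hC h v hv hB => ?_⟩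
  have hB0 : 0 ≤ B := (abs_nonneg _).trans (hB α ⟨le_rfl, hαβ.le⟩)
  refine (integral_weight_mul_abs_deriv_rpow_le_bulk hαβ hq hv).trans ?_
  refine (mul_le_mul_of_nonneg_left (add_le_add (hv_le δ C B (h.mono (by linarith)) v hv hB)
    (hF_le δ C B hδ hC h v hv hB)) hκ.le).trans_eq ?_
  field_simp
  ring

lemma deriv_comp_reflect (α β : ℝ) (v : ℝ → ℝ) :
    deriv (fun x => v (α + β - x)) = fun x => -deriv v (α + β - x) :=
  funext fun x => deriv_comp_const_sub (f := v) (α + β) x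

lemma deriv_deriv_comp_reflect (α β : ℝ) (v : ℝ → ℝ) :
    deriv (deriv fun x => v (α + β - x)) = fun x => deriv (deriv v) (α + β - x) := by
  rw [deriv_comp_reflect]
  exact funext fun x => by rw [deriv.fun_neg, deriv_comp_const_sub, neg_neg]

lemma integral_comp_reflect (α β : ℝ) (h : ℝ → ℝ) :
    ∫ x in α..β, h (α + β - x) = ∫ x in α..β, h x := by
  simp [intervalIntegral.integral_comp_sub_left]

lemma ProductBound.exists_integral_abs_deriv_rpow_le {α β q p r : ℝ} (hαβ : α < β) (hq : 2 < q)
    (hp : 0 ≤ p) (hr : 0 ≤ r) :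
    ∃ A : ℝ, 0 < A ∧ ∀ δ C B : ℝ, 0 ≤ δ → 0 ≤ C → ProductBound q p r δ C (8 * B) →
      ∀ v : ℝ → ℝ, ContDiff ℝ 2 v → (∀ x ∈ Set.Icc α β, |v x| ≤ B) →
        ∫ x in α..β, |deriv v x| ^ q ≤ A * (δ * (∫ x in α..β, |v x| ^ p) +
          C * ∫ x in α..β, (|deriv v x| + |deriv (deriv v) x|) ^ r) := by
  obtain ⟨E, hE, hweight⟩ := ProductBound.exists_integral_weight_mul_le hαβ hq hp hr
    (η := 1 / 4) (by norm_num)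
  refine ⟨4 * E, by positivity, fun δ C B hδ hC h v hv hB => ?_⟩
  have hvq : Continuous fun x => |deriv v x| ^ q :=
    (hv.continuous_deriv one_le_two).abs.rpow_const fun _ => .inr (by linarith)
  have hleft := hweight δ C B hδ hC h v hv hB
  have hright := hweight δ C B hδ hC h (fun x => v (α + β - x)) (by fun_prop)
    fun x hx => hB _ ⟨by linarith [hx.2], by linarith [hx.1]⟩
  simp only [deriv_deriv_comp_reflect] at hright
  simp only [deriv_comp_reflect, abs_neg] at hright
  rw [integral_comp_reflect α β fun x => |deriv v x| ^ q,
    integral_comp_reflect α β fun x => |v x| ^ p,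
    integral_comp_reflect α β fun x => (|deriv v x| + |deriv (deriv v) x|) ^ r,
    ← integral_comp_reflect] at hright
  simp only [sub_sub_cancel] at hright
  have hsplit : ∫ x in α..β, |deriv v x| ^ q =
      (∫ x in α..β, (β - x) / (β - α) * |deriv v x| ^ q) +
        ∫ x in α..β, (β - (α + β - x)) / (β - α) * |deriv v x| ^ q := by
    rw [← intervalIntegral.integral_add (Continuous.intervalIntegrable (by fun_prop) _ _)
      (Continuous.intervalIntegrable (by fun_prop) _ _)]
    refine intervalIntegral.integral_congr fun x _ => ?_
    have : β - α ≠ 0 := (sub_pos.2 hαβ).ne'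
    field_simp
    ring
  linarith

/-! ### Coordinate derivatives and iterated derivatives -/

/-- The point `p` with its `i`-th coordinate replaced by `s`: the parametrization of the line
through `p` in direction `i` along which `pd i` differentiates. -/
def replaceCoord (i : Fin 3) (p : ℝ³) (s : ℝ) : ℝ³ :=
  if i = 0 then (s, p.2.1, p.2.2) else if i = 1 then (p.1, s, p.2.2) else (p.1, p.2.1, s)

/-- The `i`-th standard basis vector of `ℝ × ℝ × ℝ`. -/
def coordVec (i : Fin 3) : ℝ³ :=
  if i = 0 then (1, 0, 0) else if i = 1 then (0, 1, 0) else (0, 0, 1)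

/-- The `i`-th coordinate functional on `ℝ × ℝ × ℝ`. -/
def coordCLM (i : Fin 3) : ℝ³ →L[ℝ] ℝ :=
  if i = 0 then .fst ℝ ℝ (ℝ × ℝ)
  else if i = 1 then (ContinuousLinearMap.fst ℝ ℝ ℝ).comp (.snd ℝ ℝ (ℝ × ℝ))
  else (ContinuousLinearMap.snd ℝ ℝ ℝ).comp (.snd ℝ ℝ (ℝ × ℝ))

lemma norm_coordVec (i : Fin 3) : ‖coordVec i‖ = 1 := by
  fin_cases i <;> simp [coordVec, Prod.norm_def]

lemma norm_coordCLM_le (i : Fin 3) : ‖coordCLM i‖ ≤ 1 := by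
  refine ContinuousLinearMap.opNorm_le_bound _ zero_le_one fun p => ?_
  fin_cases i <;> simp [coordCLM, Prod.norm_def]

lemma sum_coordCLM_smul_coordVec (p : ℝ³) : ∑ i, coordCLM i p • coordVec i = p := by
  simp [Fin.sum_univ_three, coordCLM, coordVec]

lemma hasDerivAt_replaceCoord (i : Fin 3) (p : ℝ³) (s : ℝ) :
    HasDerivAt (replaceCoord i p) (coordVec i) s := by
  fin_cases i
  · exact (hasDerivAt_id s).prodMk ((hasDerivAt_const s p.2.1).prodMk (hasDerivAt_const s p.2.2))
  · exact (hasDerivAt_const s p.1).prodMk ((hasDerivAt_id s).prodMk (hasDerivAt_const s p.2.2))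
  · exact (hasDerivAt_const s p.1).prodMk ((hasDerivAt_const s p.2.1).prodMk (hasDerivAt_id s))

lemma contDiff_replaceCoord (i : Fin 3) (p : ℝ³) : ContDiff ℝ ∞ (replaceCoord i p) := by
  fin_cases i
  · exact contDiff_id.prodMk contDiff_const
  · exact contDiff_const.prodMk (contDiff_id.prodMk contDiff_const)
  · exact contDiff_const.prodMk (contDiff_const.prodMk contDiff_id)

section Differentiable

variable {f g : ℝ³ → ℝ}

lemma hasDerivAt_comp_replaceCoord (hf : Differentiable ℝ f) (i : Fin 3) (p : ℝ³) (s : ℝ) :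
    HasDerivAt (fun s => f (replaceCoord i p s))
      (fderiv ℝ f (replaceCoord i p s) (coordVec i)) s :=
  (hf _).hasFDerivAt.comp_hasDerivAt s (hasDerivAt_replaceCoord i p s)

lemma pd_eq_fderiv (hf : Differentiable ℝ f) (i : Fin 3) :
    pd i f = fun p => fderiv ℝ f p (coordVec i) := by
  funext p
  fin_cases i
  · exact (hasDerivAt_comp_replaceCoord hf 0 p p.1).deriv
  · exact (hasDerivAt_comp_replaceCoord hf 1 p p.2.1).deriv
  · exact (hasDerivAt_comp_replaceCoord hf 2 p p.2.2).deriv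

lemma deriv_comp_replaceCoord (hf : Differentiable ℝ f) (i : Fin 3) (p : ℝ³) :
    deriv (fun s => f (replaceCoord i p s)) = fun s => pd i f (replaceCoord i p s) := by
  simp only [pd_eq_fderiv hf]
  exact funext fun s => (hasDerivAt_comp_replaceCoord hf i p s).deriv

lemma fderiv_eq_sum_pd_smul (hf : Differentiable ℝ f) (p : ℝ³) :
    fderiv ℝ f p = ∑ i, pd i f p • coordCLM i := by
  refine ContinuousLinearMap.ext fun v => ?_
  conv_lhs => rw [← sum_coordCLM_smul_coordVec v]
  simp [pd_eq_fderiv hf, mul_comm]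

end Differentiable

section Smooth

variable {f : ℝ³ → ℝ}

lemma contDiff_pd (hf : ContDiff ℝ ∞ f) (i : Fin 3) : ContDiff ℝ ∞ (pd i f) := by
  rw [pd_eq_fderiv (hf.differentiable (by simp))]
  exact (hf.fderiv_right (m := ∞) (by simp)).clm_apply contDiff_const

lemma contDiff_pdComp (hf : ContDiff ℝ ∞ f) :
    ∀ {n : ℕ} (w : Fin n → Fin 3), ContDiff ℝ ∞ (pdComp w f)
  | 0, _ => hf
  | _ + 1, w => contDiff_pd (contDiff_pdComp hf fun j => w j.succ) (w 0)

lemma norm_iteratedFDeriv_pd_le (hf : ContDiff ℝ ∞ f) (i : Fin 3) (k : ℕ) (p : ℝ³) :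
    ‖iteratedFDeriv ℝ k (pd i f) p‖ ≤ ‖iteratedFDeriv ℝ (k + 1) f p‖ := by
  have hf' : ContDiff ℝ ∞ (fderiv ℝ f) := hf.fderiv_right (by simp)
  rw [pd_eq_fderiv (hf.differentiable (by simp)), ← norm_iteratedFDeriv_fderiv]
  simpa [norm_coordVec] using norm_iteratedFDeriv_clm_apply_const (c := coordVec i)
    hf'.contDiffAt (mod_cast le_top : (k : ℕ∞ω) ≤ ∞)

lemma norm_iteratedFDeriv_succ_le_sum_pd (hf : ContDiff ℝ ∞ f) (k : ℕ) (p : ℝ³) :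
    ‖iteratedFDeriv ℝ (k + 1) f p‖ ≤ ∑ i, ‖iteratedFDeriv ℝ k (pd i f) p‖ := by
  let L (i : Fin 3) : ℝ →L[ℝ] ℝ³ →L[ℝ] ℝ := .toSpanSingleton ℝ (coordCLM i)
  have hk : (k : ℕ∞ω) ≤ ∞ := mod_cast le_top
  have hsmooth (i : Fin 3) : ContDiff ℝ ∞ (L i ∘ pd i f) := (L i).contDiff.comp (contDiff_pd hf i)
  have hL (i : Fin 3) : ‖L i‖ ≤ 1 := by
    simpa [L, ContinuousLinearMap.norm_toSpanSingleton] using norm_coordCLM_le i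
  have hfderiv : fderiv ℝ f = fun p => ∑ i, (L i ∘ pd i f) p := by
    funext p
    simp [fderiv_eq_sum_pd_smul (hf.differentiable (by simp)), L]
  rw [← norm_iteratedFDeriv_fderiv, hfderiv,
    iteratedFDeriv_sum fun i _ => (hsmooth i).of_le hk, Finset.sum_apply]
  refine (norm_sum_le _ _).trans (Finset.sum_le_sum fun i _ => ?_)
  exact ((L i).norm_iteratedFDeriv_comp_left (contDiff_pd hf i).contDiffAt hk).trans
    (mul_le_of_le_one_left (norm_nonneg _) (hL i))

lemma norm_iteratedFDeriv_pdComp_le (hf : ContDiff ℝ ∞ f) (p : ℝ³) :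
    ∀ {n : ℕ} (w : Fin n → Fin 3) (k : ℕ),
      ‖iteratedFDeriv ℝ k (pdComp w f) p‖ ≤ ‖iteratedFDeriv ℝ (n + k) f p‖
  | 0, _, k => by rw [zero_add, pdComp]
  | n + 1, w, k => by
    have htail := norm_iteratedFDeriv_pdComp_le hf p (fun j => w j.succ) (k + 1)
    rw [← add_assoc, add_right_comm] at htail
    exact (norm_iteratedFDeriv_pd_le (contDiff_pdComp hf _) (w 0) k p).trans htail

lemma abs_pdComp_le_norm_iteratedFDeriv (hf : ContDiff ℝ ∞ f) {n : ℕ} (w : Fin n → Fin 3)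
    (p : ℝ³) : |pdComp w f p| ≤ ‖iteratedFDeriv ℝ n f p‖ := by
  simpa using norm_iteratedFDeriv_pdComp_le hf p w 0

lemma norm_iteratedFDeriv_add_le_sum_pdComp (hf : ContDiff ℝ ∞ f) (p : ℝ³) (n k : ℕ) :
    ‖iteratedFDeriv ℝ (n + k) f p‖ ≤
      ∑ w : Fin n → Fin 3, ‖iteratedFDeriv ℝ k (pdComp w f) p‖ := by
  induction n generalizing k with
  | zero => rw [zero_add, Fintype.sum_unique, pdComp]
  | succ n ih =>
    calc ‖iteratedFDeriv ℝ (n + 1 + k) f p‖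
        ≤ ∑ w : Fin n → Fin 3, ‖iteratedFDeriv ℝ (k + 1) (pdComp w f) p‖ := by
          rw [add_right_comm, add_assoc]
          exact ih (k + 1)
      _ ≤ ∑ w : Fin n → Fin 3, ∑ i, ‖iteratedFDeriv ℝ k (pd i (pdComp w f)) p‖ := by
          gcongr with w
          exact norm_iteratedFDeriv_succ_le_sum_pd (contDiff_pdComp hf w) k p
      _ = ∑ w : Fin (n + 1) → Fin 3, ‖iteratedFDeriv ℝ k (pdComp w f) p‖ := by
          rw [Finset.sum_comm, ← Fintype.sum_prod_type',
            ← (Fin.consEquiv fun _ => Fin 3).sum_comp]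
          rfl

lemma norm_iteratedFDeriv_le_sum_abs_pdComp (hf : ContDiff ℝ ∞ f) (n : ℕ) (p : ℝ³) :
    ‖iteratedFDeriv ℝ n f p‖ ≤ ∑ w : Fin n → Fin 3, |pdComp w f p| := by
  simpa using norm_iteratedFDeriv_add_le_sum_pdComp hf p n 0

lemma continuous_norm_iteratedFDeriv (hf : ContDiff ℝ ∞ f) (n : ℕ) :
    Continuous fun p => ‖iteratedFDeriv ℝ n f p‖ :=
  (hf.continuous_iteratedFDeriv (mod_cast le_top)).norm

end Smooth

/-! ### Integration over the cell -/

section ProductSets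

variable {α β : Type*} [MeasurableSpace α] [MeasurableSpace β] {μ : Measure α} {ν : Measure β}
  [SFinite μ] [SFinite ν] {s : Set α} {t : Set β} {f : α × β → ℝ}

lemma setIntegral_prod_nonpos_of_right (hs : MeasurableSet s)
    (hf : IntegrableOn f (s ×ˢ t) (μ.prod ν)) (h : ∀ a ∈ s, ∫ b in t, f (a, b) ∂ν ≤ 0) :
    ∫ z in s ×ˢ t, f z ∂μ.prod ν ≤ 0 := by
  rw [setIntegral_prod _ hf]
  exact setIntegral_nonpos hs h

lemma setIntegral_prod_nonpos_of_left (ht : MeasurableSet t)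
    (hf : IntegrableOn f (s ×ˢ t) (μ.prod ν)) (h : ∀ b ∈ t, ∫ a in s, f (a, b) ∂μ ≤ 0) :
    ∫ z in s ×ˢ t, f z ∂μ.prod ν ≤ 0 := by
  rw [← setIntegral_prod_swap]
  exact setIntegral_prod_nonpos_of_right ht hf.swap h

end ProductSets

lemma setIntegral_Icc_eq_intervalIntegral {a b : ℝ} (hab : a ≤ b) (f : ℝ → ℝ) :
    ∫ x in Set.Icc a b, f x = ∫ x in a..b, f x := by
  rw [intervalIntegral.integral_of_le hab, integral_Icc_eq_integral_Ioc]

section Cell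

variable {A₀ M : ℝ}

lemma isCompact_cell : IsCompact (cell A₀ M) :=
  isCompact_Icc.prod (isCompact_Icc.prod isCompact_Icc)

lemma integrableOn_cell {f : ℝ³ → ℝ} (hf : Continuous f) : IntegrableOn f (cell A₀ M) :=
  hf.continuousOn.integrableOn_compact isCompact_cell

lemma setIntegral_cell_mono {f g : ℝ³ → ℝ} (hf : Continuous f) (hg : Continuous g)
    (h : ∀ p ∈ cell A₀ M, f p ≤ g p) : ∫ p in cell A₀ M, f p ≤ ∫ p in cell A₀ M, g p :=
  setIntegral_mono_on (integrableOn_cell hf) (integrableOn_cell hg)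
    isCompact_cell.measurableSet h

/-- Lower endpoint of the `i`-th side of `cell A₀ M`. -/
def cellLower (A₀ : ℝ) (i : Fin 3) : ℝ := if i = 0 then -A₀ else 0

/-- Upper endpoint of the `i`-th side of `cell A₀ M`. -/
def cellUpper (M : ℝ) (i : Fin 3) : ℝ := if i = 0 then M else if i = 1 then 2 * Real.pi else 1

lemma cellLower_lt_cellUpper (hAM : -A₀ < M) (i : Fin 3) : cellLower A₀ i < cellUpper M i := by
  fin_cases i
  · exact hAM
  · exact Real.two_pi_pos
  · exact one_pos

lemma replaceCoord_mem_cell {p : ℝ³} (hp : p ∈ cell A₀ M) (i : Fin 3) {s : ℝ}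
    (hs : s ∈ Set.Icc (cellLower A₀ i) (cellUpper M i)) : replaceCoord i p s ∈ cell A₀ M := by
  obtain ⟨hx, hy, ht⟩ := hp
  fin_cases i
  · exact ⟨hs, hy, ht⟩
  · exact ⟨hx, hs, ht⟩
  · exact ⟨hx, hy, hs⟩

lemma setIntegral_cell_nonpos_of_lines (hAM : -A₀ < M) (i : Fin 3) {f : ℝ³ → ℝ}
    (hf : Continuous f)
    (h : ∀ p ∈ cell A₀ M, ∫ s in cellLower A₀ i..cellUpper M i, f (replaceCoord i p s) ≤ 0) :
    ∫ p in cell A₀ M, f p ≤ 0 := by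
  have hline (p) (hp : p ∈ cell A₀ M) :
      ∫ s in Set.Icc (cellLower A₀ i) (cellUpper M i), f (replaceCoord i p s) ≤ 0 :=
    (setIntegral_Icc_eq_intervalIntegral (cellLower_lt_cellUpper hAM i).le _).trans_le (h p hp)
  have hslice (x : ℝ) : IntegrableOn (fun z => f (x, z))
      (Set.Icc 0 (2 * Real.pi) ×ˢ Set.Icc (0 : ℝ) 1) :=
    (hf.comp (by fun_prop)).continuousOn.integrableOn_compact (isCompact_Icc.prod isCompact_Icc)
  have hM : M ∈ Set.Icc (-A₀) M := ⟨hAM.le, le_rfl⟩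
  have hπ : (0 : ℝ) ∈ Set.Icc 0 (2 * Real.pi) := ⟨le_rfl, Real.two_pi_pos.le⟩
  have h01 : (0 : ℝ) ∈ Set.Icc (0 : ℝ) 1 := ⟨le_rfl, zero_le_one⟩
  fin_cases i
  · exact setIntegral_prod_nonpos_of_left (measurableSet_Icc.prod measurableSet_Icc)
      (integrableOn_cell hf) fun z hz => hline (M, z) ⟨hM, hz⟩
  · exact setIntegral_prod_nonpos_of_right measurableSet_Icc (integrableOn_cell hf) fun x hx =>
      setIntegral_prod_nonpos_of_left measurableSet_Icc (hslice x) fun t ht =>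
        hline (x, 0, t) ⟨hx, hπ, ht⟩
  · exact setIntegral_prod_nonpos_of_right measurableSet_Icc (integrableOn_cell hf) fun x hx =>
      setIntegral_prod_nonpos_of_right measurableSet_Icc (hslice x) fun y hy =>
        hline (x, y, 0) ⟨hx, hy, h01⟩

lemma intervalIntegrable_comp_replaceCoord {f : ℝ³ → ℝ} (hf : Continuous f) (i : Fin 3) (p : ℝ³)
    (a b : ℝ) : IntervalIntegrable (fun s => f (replaceCoord i p s)) volume a b :=
  (hf.comp (contDiff_replaceCoord i p).continuous).intervalIntegrable a b

lemma setIntegral_cell_le_of_lines (hAM : -A₀ < M) (i : Fin 3) {f g : ℝ³ → ℝ}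
    (hf : Continuous f) (hg : Continuous g)
    (h : ∀ p ∈ cell A₀ M, ∫ s in cellLower A₀ i..cellUpper M i, f (replaceCoord i p s) ≤
      ∫ s in cellLower A₀ i..cellUpper M i, g (replaceCoord i p s)) :
    ∫ p in cell A₀ M, f p ≤ ∫ p in cell A₀ M, g p := by
  rw [← sub_nonpos, ← integral_sub (integrableOn_cell hf) (integrableOn_cell hg)]
  refine setIntegral_cell_nonpos_of_lines hAM i (hf.sub hg) fun p hp => ?_
  rw [intervalIntegral.integral_sub (intervalIntegrable_comp_replaceCoord hf i p _ _)
    (intervalIntegrable_comp_replaceCoord hg i p _ _)]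
  exact sub_nonpos.2 (h p hp)

lemma integral_cell_sum_rpow_le {ι : Type*} (s : Finset ι) {g : ι → ℝ³ → ℝ} {e : ℝ} (he : 1 ≤ e)
    (hg : ∀ i ∈ s, Continuous (g i)) (hg0 : ∀ i ∈ s, ∀ p, 0 ≤ g i p) :
    ∫ p in cell A₀ M, (∑ i ∈ s, g i p) ^ e ≤
      (s.card : ℝ) ^ (e - 1) * ∑ i ∈ s, ∫ p in cell A₀ M, g i p ^ e := by
  have he0 : 0 ≤ e := zero_le_one.trans he
  have hpow (i) (hi : i ∈ s) : Continuous fun p => g i p ^ e :=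
    (hg i hi).rpow_const fun _ => .inr he0
  rw [← integral_finsetSum _ fun i hi => integrableOn_cell (hpow i hi), ← integral_const_mul]
  exact setIntegral_cell_mono ((continuous_finsetSum _ hg).rpow_const fun _ => .inr he0)
    ((continuous_finsetSum _ hpow).const_mul _)
    fun p _ => Real.rpow_sum_le_const_mul_sum_rpow_of_nonneg s he fun i hi => hg0 i hi p

end Cell

/-! ### Gagliardo–Nirenberg inequalities on the cell -/

section GagliardoNirenberg

variable {A₀ M : ℝ}

lemma ProductBound.exists_integral_abs_pd_rpow_le (hAM : -A₀ < M) {q p r : ℝ} (hq : 2 < q)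
    (hp : 0 ≤ p) (hr : 0 ≤ r) (i : Fin 3) :
    ∃ A : ℝ, 0 < A ∧ ∀ δ C B : ℝ, 0 ≤ δ → 0 ≤ C → ProductBound q p r δ C (8 * B) →
      ∀ v : ℝ³ → ℝ, ContDiff ℝ ∞ v → (∀ x ∈ cell A₀ M, |v x| ≤ B) →
        ∫ x in cell A₀ M, |pd i v x| ^ q ≤ A * (δ * (∫ x in cell A₀ M, |v x| ^ p) +
          C * ∫ x in cell A₀ M, (|pd i v x| + |pd i (pd i v) x|) ^ r) := by
  obtain ⟨A, hA, hline⟩ := ProductBound.exists_integral_abs_deriv_rpow_le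
    (cellLower_lt_cellUpper hAM i) hq hp hr
  refine ⟨A, hA, fun δ C B hδ hC hbound v hv hB => ?_⟩
  have hv1 := contDiff_pd hv i
  have hv2 := contDiff_pd hv1 i
  have hcq : Continuous fun x => |pd i v x| ^ q :=
    hv1.continuous.abs.rpow_const fun _ => .inr (by linarith)
  have hcp : Continuous fun x => |v x| ^ p := hv.continuous.abs.rpow_const fun _ => .inr hp
  have hcr : Continuous fun x => (|pd i v x| + |pd i (pd i v) x|) ^ r :=
    (hv1.continuous.abs.add hv2.continuous.abs).rpow_const fun _ => .inr hr
  calc ∫ x in cell A₀ M, |pd i v x| ^ q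
      ≤ ∫ x in cell A₀ M,
          A * (δ * |v x| ^ p + C * (|pd i v x| + |pd i (pd i v) x|) ^ r) := by
        refine setIntegral_cell_le_of_lines hAM i hcq (by fun_prop) fun x hx => ?_
        have h := hline δ C B hδ hC hbound (fun s => v (replaceCoord i x s))
          (mod_cast contDiff_infty.1 (hv.comp (contDiff_replaceCoord i x)) 2)
          fun s hs => hB _ (replaceCoord_mem_cell hx i hs)
        rw [deriv_comp_replaceCoord (hv.differentiable (by simp)),
          deriv_comp_replaceCoord (hv1.differentiable (by simp))] at h
        rwa [intervalIntegral.integral_const_mul, intervalIntegral.integral_add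
          ((intervalIntegrable_comp_replaceCoord hcp i x _ _).const_mul δ)
          ((intervalIntegrable_comp_replaceCoord hcr i x _ _).const_mul C),
          intervalIntegral.integral_const_mul, intervalIntegral.integral_const_mul]
    _ = _ := by
        rw [integral_const_mul, integral_add ((integrableOn_cell hcp).const_mul δ)
          ((integrableOn_cell hcr).const_mul C), integral_const_mul, integral_const_mul]

lemma continuous_norm_iteratedFDeriv_rpow {f : ℝ³ → ℝ} (hf : ContDiff ℝ ∞ f) (n : ℕ) {e : ℝ}
    (he : 0 ≤ e) : Continuous fun p => ‖iteratedFDeriv ℝ n f p‖ ^ e :=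
  (continuous_norm_iteratedFDeriv hf n).rpow_const fun _ => .inr he

lemma ProductBound.exists_integral_abs_pdComp_rpow_le (hAM : -A₀ < M) {q p r : ℝ} (hq : 2 < q)
    (hp : 0 ≤ p) (hr : 0 ≤ r) {m : ℕ} (w : Fin (m + 1) → Fin 3) :
    ∃ A : ℝ, 0 < A ∧ ∀ δ C B : ℝ, 0 ≤ δ → 0 ≤ C → ProductBound q p r δ C (8 * B) →
      ∀ f : ℝ³ → ℝ, ContDiff ℝ ∞ f → (∀ x ∈ cell A₀ M, ‖iteratedFDeriv ℝ m f x‖ ≤ B) →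
        ∫ x in cell A₀ M, |pdComp w f x| ^ q ≤
          A * (δ * (∫ x in cell A₀ M, ‖iteratedFDeriv ℝ m f x‖ ^ p) +
            C * ∫ x in cell A₀ M,
              (‖iteratedFDeriv ℝ (m + 1) f x‖ + ‖iteratedFDeriv ℝ (m + 2) f x‖) ^ r) := by
  obtain ⟨A, hA, hpd⟩ := ProductBound.exists_integral_abs_pd_rpow_le hAM hq hp hr (w 0)
  refine ⟨A, hA, fun δ C B hδ hC hbound f hf hB => ?_⟩
  set w' : Fin (m + 2) → Fin 3 := Fin.cons (w 0) w
  have htail := contDiff_pdComp hf fun j => w j.succ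
  have habs := abs_pdComp_le_norm_iteratedFDeriv hf fun j => w j.succ
  refine (hpd δ C B hδ hC hbound _ htail fun x hx => (habs x).trans (hB x hx)).trans ?_
  have hcont1 := (contDiff_pdComp hf w).continuous.abs.add (contDiff_pdComp hf w').continuous.abs
  have hcont2 := (continuous_norm_iteratedFDeriv hf (m + 1)).add
    (continuous_norm_iteratedFDeriv hf (m + 2))
  gcongr A * (δ * ?_ + C * ?_)
  · exact setIntegral_cell_mono (htail.continuous.abs.rpow_const fun _ => .inr hp)
      (continuous_norm_iteratedFDeriv_rpow hf m hp)
      fun x _ => Real.rpow_le_rpow (abs_nonneg _) (habs x) hp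
  · exact setIntegral_cell_mono (hcont1.rpow_const fun _ => .inr hr)
      (hcont2.rpow_const fun _ => .inr hr) fun x _ => Real.rpow_le_rpow (by positivity)
      (add_le_add (abs_pdComp_le_norm_iteratedFDeriv hf w x)
        (abs_pdComp_le_norm_iteratedFDeriv hf w' x)) hr

lemma ProductBound.exists_integral_norm_iteratedFDeriv_rpow_le (hAM : -A₀ < M) {q p r : ℝ}
    (hq : 2 < q) (hp : 0 ≤ p) (hr : 0 ≤ r) (m : ℕ) :
    ∃ A : ℝ, 0 < A ∧ ∀ δ C B : ℝ, 0 ≤ δ → 0 ≤ C → ProductBound q p r δ C (8 * B) →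
      ∀ f : ℝ³ → ℝ, ContDiff ℝ ∞ f → (∀ x ∈ cell A₀ M, ‖iteratedFDeriv ℝ m f x‖ ≤ B) →
        ∫ x in cell A₀ M, ‖iteratedFDeriv ℝ (m + 1) f x‖ ^ q ≤
          A * (δ * (∫ x in cell A₀ M, ‖iteratedFDeriv ℝ m f x‖ ^ p) +
            C * ∫ x in cell A₀ M,
              (‖iteratedFDeriv ℝ (m + 1) f x‖ + ‖iteratedFDeriv ℝ (m + 2) f x‖) ^ r) := by
  choose A hA hpd using ProductBound.exists_integral_abs_pdComp_rpow_le (m := m) hAM hq hp hr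
  let N : ℝ := (Fintype.card (Fin (m + 1) → Fin 3) : ℝ) ^ (q - 1)
  refine ⟨N * ∑ w, A w, ?_, fun δ C B hδ hC hbound f hf hB => ?_⟩
  · have : 0 < N := by simp only [N, Fintype.card_fun, Fintype.card_fin]; positivity
    exact mul_pos this (Finset.sum_pos (fun w _ => hA w) Finset.univ_nonempty)
  have hword (w : Fin (m + 1) → Fin 3) := (contDiff_pdComp hf w).continuous.abs
  calc ∫ x in cell A₀ M, ‖iteratedFDeriv ℝ (m + 1) f x‖ ^ q
      ≤ ∫ x in cell A₀ M, (∑ w : Fin (m + 1) → Fin 3, |pdComp w f x|) ^ q :=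
        setIntegral_cell_mono (continuous_norm_iteratedFDeriv_rpow hf _ (by linarith))
          ((continuous_finsetSum _ fun w _ => hword w).rpow_const fun _ => .inr (by linarith))
          fun x _ => Real.rpow_le_rpow (norm_nonneg _)
            (norm_iteratedFDeriv_le_sum_abs_pdComp hf _ x) (by linarith)
    _ ≤ N * ∑ w : Fin (m + 1) → Fin 3, ∫ x in cell A₀ M, |pdComp w f x| ^ q :=
        integral_cell_sum_rpow_le _ (by linarith) (fun w _ => hword w) fun _ _ _ => abs_nonneg _
    _ ≤ _ := by
        rw [mul_assoc, Finset.sum_mul]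
        gcongr with w
        exact hpd w δ C B hδ hC hbound f hf hB

/-- The total `L^e`-energy of the derivatives of order at most `k` on the cell. -/
def derivEnergy (A₀ M : ℝ) (k : ℕ) (e : ℝ) (f : ℝ³ → ℝ) : ℝ :=
  ∑ j ∈ Finset.range (k + 1), ∫ x in cell A₀ M, ‖iteratedFDeriv ℝ j f x‖ ^ e

lemma derivEnergy_nonneg (k : ℕ) (e : ℝ) (f : ℝ³ → ℝ) : 0 ≤ derivEnergy A₀ M k e f :=
  Finset.sum_nonneg fun _ _ => integral_nonneg fun _ => by positivity

lemma integral_norm_iteratedFDeriv_rpow_le_derivEnergy {j k : ℕ} (hjk : j ≤ k) (e : ℝ)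
    (f : ℝ³ → ℝ) :
    ∫ x in cell A₀ M, ‖iteratedFDeriv ℝ j f x‖ ^ e ≤ derivEnergy A₀ M k e f :=
  Finset.single_le_sum (f := fun j => ∫ x in cell A₀ M, ‖iteratedFDeriv ℝ j f x‖ ^ e)
    (fun _ _ => integral_nonneg fun _ => by positivity) (Finset.mem_range_succ_iff.2 hjk)

lemma integral_add_rpow_le_derivEnergy {f : ℝ³ → ℝ} (hf : ContDiff ℝ ∞ f) {i j k : ℕ}
    (hi : i ≤ k) (hj : j ≤ k) {e : ℝ} (he : 0 ≤ e) :
    ∫ x in cell A₀ M, (‖iteratedFDeriv ℝ i f x‖ + ‖iteratedFDeriv ℝ j f x‖) ^ e ≤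
      2 ^ e * 2 * derivEnergy A₀ M k e f := by
  have hci := continuous_norm_iteratedFDeriv_rpow hf i he
  have hcj := continuous_norm_iteratedFDeriv_rpow hf j he
  calc _ ≤ ∫ x in cell A₀ M,
        2 ^ e * (‖iteratedFDeriv ℝ i f x‖ ^ e + ‖iteratedFDeriv ℝ j f x‖ ^ e) :=
        setIntegral_cell_mono (((continuous_norm_iteratedFDeriv hf i).add
          (continuous_norm_iteratedFDeriv hf j)).rpow_const fun _ => .inr he)
          ((hci.add hcj).const_mul _)
          fun x _ => add_rpow_le_two_rpow_mul (norm_nonneg _) (norm_nonneg _) he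
    _ ≤ 2 ^ e * (derivEnergy A₀ M k e f + derivEnergy A₀ M k e f) := by
        rw [integral_const_mul, integral_add (integrableOn_cell hci) (integrableOn_cell hcj)]
        gcongr
        · exact integral_norm_iteratedFDeriv_rpow_le_derivEnergy hi e f
        · exact integral_norm_iteratedFDeriv_rpow_le_derivEnergy hj e f
    _ = _ := by ring

lemma ProductBound.integral_norm_iteratedFDeriv_rpow_le {q p r δ C B : ℝ} (hq : 0 < q)
    (hp : 0 ≤ p) (hr : 0 ≤ r) (hbound : ProductBound q p r δ C B) {f : ℝ³ → ℝ}
    (hf : ContDiff ℝ ∞ f) {j : ℕ} (hB : ∀ x ∈ cell A₀ M, ‖iteratedFDeriv ℝ j f x‖ ≤ B) :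
    ∫ x in cell A₀ M, ‖iteratedFDeriv ℝ j f x‖ ^ q ≤
      δ * (∫ x in cell A₀ M, ‖iteratedFDeriv ℝ j f x‖ ^ p) +
        C * ∫ x in cell A₀ M, ‖iteratedFDeriv ℝ j f x‖ ^ r := by
  have hcp := (continuous_norm_iteratedFDeriv_rpow hf j hp).const_mul δ
  have hcr := (continuous_norm_iteratedFDeriv_rpow hf j hr).const_mul C
  rw [← integral_const_mul, ← integral_const_mul,
    ← integral_add (integrableOn_cell hcp) (integrableOn_cell hcr)]
  refine setIntegral_cell_mono (continuous_norm_iteratedFDeriv_rpow hf j hq.le) (hcp.add hcr)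
    fun x hx => ?_
  have ha := norm_nonneg (iteratedFDeriv ℝ j f x)
  have h := hbound _ _ ha ha (hB x hx)
  rwa [Real.mul_rpow ha ha, ← Real.rpow_add' ha (by linarith), add_halves] at h

lemma ProductBound.exists_derivEnergy_le (hAM : -A₀ < M) {q p r : ℝ} (hq : 2 < q) (hp : 0 ≤ p)
    (hr : 0 ≤ r) (m : ℕ) :
    ∃ A : ℝ, 0 < A ∧ ∀ δ C B : ℝ, 0 ≤ δ → 0 ≤ C → 0 ≤ B → ProductBound q p r δ C (8 * B) →
      ∀ f : ℝ³ → ℝ, ContDiff ℝ ∞ f →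
        (∀ j ≤ m, ∀ x ∈ cell A₀ M, ‖iteratedFDeriv ℝ j f x‖ ≤ B) →
        derivEnergy A₀ M (m + 1) q f ≤
          A * (δ * derivEnergy A₀ M m p f + C * derivEnergy A₀ M (m + 2) r f) := by
  obtain ⟨A, hA, htop⟩ := ProductBound.exists_integral_norm_iteratedFDeriv_rpow_le hAM hq hp hr m
  refine ⟨A * (2 ^ r * 2) + (m + 1), by positivity, fun δ C B hδ hC hB0 hbound f hf hB => ?_⟩
  set T := δ * derivEnergy A₀ M m p f + C * derivEnergy A₀ M (m + 2) r f with hT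
  have hlow (j) (hj : j ∈ Finset.range (m + 1)) :
      ∫ x in cell A₀ M, ‖iteratedFDeriv ℝ j f x‖ ^ q ≤ T := by
    have hjm := Finset.mem_range_succ_iff.1 hj
    refine (hbound.integral_norm_iteratedFDeriv_rpow_le (by linarith) hp hr hf
      fun x hx => (hB j hjm x hx).trans (by linarith)).trans ?_
    rw [hT]
    gcongr <;> exact integral_norm_iteratedFDeriv_rpow_le_derivEnergy (by lia) _ f
  have hhigh : ∫ x in cell A₀ M, ‖iteratedFDeriv ℝ (m + 1) f x‖ ^ q ≤ A * (2 ^ r * 2) * T := by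
    have hδE : 0 ≤ δ * derivEnergy A₀ M m p f := mul_nonneg hδ (derivEnergy_nonneg _ _ _)
    have h2r : (1 : ℝ) ≤ 2 ^ r * 2 := by
      linarith [Real.one_le_rpow (one_le_two (α := ℝ)) hr]
    calc _ ≤ A * (δ * derivEnergy A₀ M m p f + C * (2 ^ r * 2 * derivEnergy A₀ M (m + 2) r f)) := by
          refine (htop δ C B hδ hC hbound f hf (hB m le_rfl)).trans ?_
          gcongr
          · exact integral_norm_iteratedFDeriv_rpow_le_derivEnergy le_rfl _ f
          · exact integral_add_rpow_le_derivEnergy hf (by lia) (by lia) hr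
      _ ≤ A * (2 ^ r * 2 * (δ * derivEnergy A₀ M m p f) +
            C * (2 ^ r * 2 * derivEnergy A₀ M (m + 2) r f)) :=
          mul_le_mul_of_nonneg_left (add_le_add (le_mul_of_one_le_left hδE h2r) le_rfl) hA.le
      _ = A * (2 ^ r * 2) * T := by rw [hT]; ring
  rw [derivEnergy, Finset.sum_range_succ, add_comm, add_mul]
  refine add_le_add hhigh ((Finset.sum_le_card_nsmul _ _ T hlow).trans_eq ?_)
  simp

lemma exists_norm_iteratedFDeriv_le {f : ℝ³ → ℝ} (hf : ContDiff ℝ ∞ f) (m : ℕ) :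
    ∃ B : ℝ, 0 < B ∧ ∀ j ≤ m, ∀ x ∈ cell A₀ M, ‖iteratedFDeriv ℝ j f x‖ ≤ B := by
  obtain ⟨B, hB, h⟩ := exists_forall_of_monotone (Finset.range (m + 1))
    (P := fun j B => ∀ x ∈ cell A₀ M, ‖iteratedFDeriv ℝ j f x‖ ≤ B)
    (fun _ _ _ hCC' h x hx => (h x hx).trans hCC') fun j _ => by
      simpa using isCompact_cell.exists_bound_of_continuousOn
        (continuous_norm_iteratedFDeriv hf j).continuousOn
  exact ⟨B, hB, fun j hj => h j (Finset.mem_range_succ_iff.2 hj)⟩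

lemma exists_derivEnergy_one_le (hAM : -A₀ < M) {n : ℕ} (hn : 2 ≤ n) {B : ℝ} (hB : 0 ≤ B) :
    ∃ C : ℝ, 0 < C ∧ ∀ f : ℝ³ → ℝ, ContDiff ℝ ∞ f → (∀ x ∈ cell A₀ M, |f x| ≤ B) →
      derivEnergy A₀ M 1 (2 * n) f ≤ C * derivEnergy A₀ M 2 n f := by
  have hn' : (2 : ℝ) ≤ n := mod_cast hn
  obtain ⟨A, hA, h⟩ := ProductBound.exists_derivEnergy_le hAM (q := 2 * n) (p := 1) (r := n)
    (by linarith) zero_le_one (by positivity) 0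
  have hbound : ProductBound (2 * n) 1 n 0 ((8 * B) ^ n + 1) (8 * B) := by
    intro a c ha hc haB
    have hpow : a ^ n ≤ (8 * B) ^ n + 1 := (pow_le_pow_left₀ ha haB n).trans (by simp)
    rw [mul_div_cancel_left₀ _ two_ne_zero, Real.rpow_natCast, Real.rpow_natCast, mul_pow,
      zero_mul, zero_add]
    gcongr
  refine ⟨A * ((8 * B) ^ n + 1), by positivity, fun f hf hfB => ?_⟩
  have hfB' : ∀ j ≤ 0, ∀ x ∈ cell A₀ M, ‖iteratedFDeriv ℝ j f x‖ ≤ B := by simpa using hfB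
  simpa [mul_assoc] using h 0 _ B le_rfl (by positivity) hB hbound f hf hfB'

lemma exists_productBound_div {n : ℝ} (hn : 0 < n) (m : ℕ) {δ : ℝ} (hδ : 0 < δ) :
    ∃ C : ℝ, 0 < C ∧ ∀ B : ℝ,
      ProductBound (2 * n / (m + 2)) (2 * n / (m + 1)) (2 * n / (m + 3)) δ C B := by
  have hconj : (2 * ((m : ℝ) + 2) / (m + 1)).HolderConjugate (2 * ((m : ℝ) + 2) / (m + 3)) := by
    rw [Real.holderConjugate_iff]
    exact ⟨by rw [lt_div_iff₀ (by positivity)]; linarith, by field_simp; ring⟩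
  obtain ⟨C, hC, hyoung⟩ := exists_mul_le_mul_rpow_add_mul_rpow hconj hδ
  refine ⟨C, hC, fun B a c ha hc _ => ?_⟩
  have hac := hyoung (a ^ (2 * n / (m + 2) / 2)) (c ^ (2 * n / (m + 2) / 2))
    (by positivity) (by positivity)
  rwa [← Real.rpow_mul ha, ← Real.rpow_mul hc,
    show 2 * n / (m + 2) / 2 * (2 * ((m : ℝ) + 2) / (m + 1)) = 2 * n / (m + 1) by field_simp,
    show 2 * n / (m + 2) / 2 * (2 * ((m : ℝ) + 2) / (m + 3)) = 2 * n / (m + 3) by field_simp,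
    ← Real.mul_rpow ha hc] at hac

lemma exists_derivEnergy_succ_le (hAM : -A₀ < M) {n : ℕ} {B : ℝ} (hB : 0 ≤ B) (m : ℕ)
    (hmn : m + 1 < n) :
    ∃ C : ℝ, 0 < C ∧ ∀ f : ℝ³ → ℝ, ContDiff ℝ ∞ f → (∀ x ∈ cell A₀ M, |f x| ≤ B) →
      derivEnergy A₀ M (m + 1) (2 * n / (m + 1)) f ≤
        C * derivEnergy A₀ M (m + 2) (2 * n / (m + 2)) f := by
  induction m with
  | zero => simpa using exists_derivEnergy_one_le hAM (by lia) hB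
  | succ m ih =>
    obtain ⟨C₀, hC₀, ih⟩ := ih (by lia)
    have hmn' : (m : ℝ) + 2 < n := mod_cast hmn
    have hq2 : 2 < 2 * (n : ℝ) / (m + 2) := by rw [lt_div_iff₀ (by positivity)]; linarith
    obtain ⟨A, hA, h⟩ := ProductBound.exists_derivEnergy_le hAM (p := 2 * n / (m + 1))
      (r := 2 * n / (m + 3)) hq2 (by positivity) (by positivity) (m + 1)
    -- `δ` is chosen so that the induction hypothesis absorbs the lower energy into the left side.
    obtain ⟨C, hC, hbound⟩ := exists_productBound_div (n := n) (by linarith) m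
      (δ := 1 / (2 * A * C₀)) (by positivity)
    refine ⟨2 * A * C, by positivity, fun f hf hfB => ?_⟩
    obtain ⟨B', hB', hderiv⟩ := exists_norm_iteratedFDeriv_le (A₀ := A₀) (M := M) hf (m + 1)
    have hstep := h _ C B' (by positivity) hC.le hB'.le (hbound _) f hf hderiv
    have habsorb : A * (1 / (2 * A * C₀) * derivEnergy A₀ M (m + 1) (2 * n / (m + 1)) f) ≤
        derivEnergy A₀ M (m + 2) (2 * n / (m + 2)) f / 2 := by
      calc _ ≤ A * (1 / (2 * A * C₀) *
            (C₀ * derivEnergy A₀ M (m + 2) (2 * n / (m + 2)) f)) := by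
            gcongr
            exact ih f hf hfB
        _ = _ := by field_simp
    push_cast
    rw [show (m : ℝ) + 1 + 1 = m + 2 by ring, show (m : ℝ) + 1 + 2 = m + 3 by ring]
    linarith

lemma exists_derivEnergy_le (hAM : -A₀ < M) {n : ℕ} {B : ℝ} (hB : 0 ≤ B) {j : ℕ} (hj : 1 ≤ j)
    (hjn : j ≤ n) :
    ∃ C : ℝ, 0 < C ∧ ∀ f : ℝ³ → ℝ, ContDiff ℝ ∞ f → (∀ x ∈ cell A₀ M, |f x| ≤ B) →
      derivEnergy A₀ M j (2 * n / j) f ≤ C * derivEnergy A₀ M n 2 f := by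
  induction hjn using Nat.decreasingInduction with
  | self =>
    have hn : (n : ℝ) ≠ 0 := by positivity
    exact ⟨1, one_pos, fun f _ _ => by rw [mul_div_cancel_right₀ _ hn, one_mul]⟩
  | of_succ j hjn ih =>
    obtain ⟨C, hC, h⟩ := ih (by lia)
    obtain ⟨m, rfl⟩ : ∃ m, j = m + 1 := ⟨j - 1, by lia⟩
    obtain ⟨C', hC', h'⟩ := exists_derivEnergy_succ_le hAM hB m hjn
    refine ⟨C' * C, by positivity, fun f hf hfB => ?_⟩
    push_cast at h ⊢
    rw [mul_assoc]
    refine (h' f hf hfB).trans (mul_le_mul_of_nonneg_left ?_ hC'.le)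
    rw [show (m : ℝ) + 2 = m + 1 + 1 by ring]
    exact h f hf hfB

lemma cellSobSq_nonneg (n : ℕ) (f : ℝ³ → ℝ) : 0 ≤ cellSobSq A₀ M n f :=
  Finset.sum_nonneg fun _ _ => Finset.sum_nonneg fun _ _ => integral_nonneg fun _ => sq_nonneg _

lemma derivEnergy_two_le_cellSobSq {f : ℝ³ → ℝ} (hf : ContDiff ℝ ∞ f) (n : ℕ) :
    derivEnergy A₀ M n 2 f ≤ 3 ^ n * cellSobSq A₀ M n f := by
  rw [derivEnergy, cellSobSq, Finset.mul_sum]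
  refine Finset.sum_le_sum fun j hj => ?_
  have hword (w : Fin j → Fin 3) := (contDiff_pdComp hf w).continuous.abs
  calc ∫ x in cell A₀ M, ‖iteratedFDeriv ℝ j f x‖ ^ (2 : ℝ)
      ≤ ∫ x in cell A₀ M, (∑ w : Fin j → Fin 3, |pdComp w f x|) ^ (2 : ℝ) :=
        setIntegral_cell_mono (continuous_norm_iteratedFDeriv_rpow hf j zero_le_two)
          ((continuous_finsetSum _ fun w _ => hword w).rpow_const fun _ => .inr zero_le_two)
          fun x _ => Real.rpow_le_rpow (norm_nonneg _)
            (norm_iteratedFDeriv_le_sum_abs_pdComp hf j x) zero_le_two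
    _ ≤ 3 ^ j * ∑ w : Fin j → Fin 3, ∫ x in cell A₀ M, pdComp w f x ^ 2 := by
        have h := integral_cell_sum_rpow_le (A₀ := A₀) (M := M) Finset.univ one_le_two
          (fun w _ => hword w) fun _ _ _ => abs_nonneg _
        norm_num at h
        simpa using h
    _ ≤ _ := by
        gcongr
        · norm_num
        · exact Finset.mem_range_succ_iff.1 hj

lemma exists_integral_norm_iteratedFDeriv_rpow_le_cellSobSq (hAM : -A₀ < M) (n : ℕ) {B : ℝ}
    (hB : 0 ≤ B) :
    ∃ C : ℝ, 0 < C ∧ ∀ f : ℝ³ → ℝ, ContDiff ℝ ∞ f → (∀ x ∈ cell A₀ M, |f x| ≤ B) →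
      ∀ j, 1 ≤ j → j ≤ n → ∫ x in cell A₀ M, ‖iteratedFDeriv ℝ j f x‖ ^ (2 * n / j : ℝ) ≤
        C * cellSobSq A₀ M n f := by
  obtain ⟨C, hC, h⟩ := exists_forall_of_monotone (Finset.Icc 1 n)
    (P := fun j C => ∀ f : ℝ³ → ℝ, ContDiff ℝ ∞ f → (∀ x ∈ cell A₀ M, |f x| ≤ B) →
      derivEnergy A₀ M j (2 * n / j) f ≤ C * derivEnergy A₀ M n 2 f)
    (fun _ _ _ hCC' h f hf hfB => (h f hf hfB).trans
      (mul_le_mul_of_nonneg_right hCC' (derivEnergy_nonneg _ _ _)))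
    fun j hj => by
      obtain ⟨C, -, h⟩ := exists_derivEnergy_le hAM hB (Finset.mem_Icc.1 hj).1
        (Finset.mem_Icc.1 hj).2
      exact ⟨C, h⟩
  refine ⟨C * 3 ^ n, by positivity, fun f hf hfB j hj hjn => ?_⟩
  calc _ ≤ derivEnergy A₀ M j (2 * n / j) f :=
        integral_norm_iteratedFDeriv_rpow_le_derivEnergy le_rfl _ f
    _ ≤ C * derivEnergy A₀ M n 2 f := h j (Finset.mem_Icc.2 ⟨hj, hjn⟩) f hf hfB
    _ ≤ C * (3 ^ n * cellSobSq A₀ M n f) := by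
        gcongr
        exact derivEnergy_two_le_cellSobSq hf n
    _ = _ := by ring

end GagliardoNirenberg

/-! ### Pointwise comparison of the fields with the coordinate derivatives -/

lemma norm_iteratedFDeriv_mul_le_of_forall {f g : ℝ³ → ℝ} (hf : ContDiff ℝ ∞ f)
    (hg : ContDiff ℝ ∞ g) (p : ℝ³) (k : ℕ) {T : ℝ}
    (h : ∀ i j, i + j = k → ‖iteratedFDeriv ℝ i f p‖ * ‖iteratedFDeriv ℝ j g p‖ ≤ T) :
    ‖iteratedFDeriv ℝ k (fun x => f x * g x) p‖ ≤ 2 ^ k * T :=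
  calc ‖iteratedFDeriv ℝ k (fun x => f x * g x) p‖
      ≤ ∑ i ∈ Finset.range (k + 1),
          k.choose i * ‖iteratedFDeriv ℝ i f p‖ * ‖iteratedFDeriv ℝ (k - i) g p‖ :=
        norm_iteratedFDeriv_mul_le hf hg p (mod_cast le_top)
    _ ≤ ∑ i ∈ Finset.range (k + 1), (k.choose i : ℝ) * T := by
        refine Finset.sum_le_sum fun i hi => ?_
        have := h i (k - i) (by grind)
        rw [mul_assoc]
        gcongr
    _ = 2 ^ k * T := by
        rw [← Finset.sum_mul]
        exact_mod_cast congrArg (fun m : ℕ => (m : ℝ) * T) (Nat.sum_range_choose k)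

/-- The derivatives of `u` of order less than `n` at `p`, scaled by powers of `r` so that a
function varying on the length scale `r⁻¹` contributes terms of the size of order-`n`
derivatives. -/
def lowerJet (r : ℝ) (u : ℝ³ → ℝ) (p : ℝ³) (n : ℕ) : ℝ :=
  ∑ j ∈ Finset.range n, r ^ (n - j) * ‖iteratedFDeriv ℝ j u p‖

/-- `lowerJet` together with the derivative of order `n` itself. -/
def weightedJet (r : ℝ) (u : ℝ³ → ℝ) (p : ℝ³) (n : ℕ) : ℝ :=
  ‖iteratedFDeriv ℝ n u p‖ + lowerJet r u p n

section Jet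

variable {r : ℝ} {u : ℝ³ → ℝ} {p : ℝ³}

lemma lowerJet_nonneg (hr : 0 ≤ r) (n : ℕ) : 0 ≤ lowerJet r u p n :=
  Finset.sum_nonneg fun _ _ => by positivity

lemma weightedJet_nonneg (hr : 0 ≤ r) (n : ℕ) : 0 ≤ weightedJet r u p n :=
  add_nonneg (norm_nonneg _) (lowerJet_nonneg hr n)

lemma norm_iteratedFDeriv_le_weightedJet (hr : 0 ≤ r) (n : ℕ) :
    ‖iteratedFDeriv ℝ n u p‖ ≤ weightedJet r u p n :=
  le_add_of_nonneg_right (lowerJet_nonneg hr n)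

lemma mul_weightedJet (n : ℕ) : r * weightedJet r u p n = lowerJet r u p (n + 1) := by
  have hterm : ∀ j ∈ Finset.range n, r ^ (n + 1 - j) * ‖iteratedFDeriv ℝ j u p‖ =
      r * (r ^ (n - j) * ‖iteratedFDeriv ℝ j u p‖) := fun j hj => by
    rw [Nat.sub_add_comm (Finset.mem_range.1 hj).le, pow_succ', mul_assoc]
  rw [weightedJet, lowerJet, lowerJet, Finset.sum_range_succ, Finset.sum_congr rfl hterm,
    ← Finset.mul_sum]
  simp [mul_add, add_comm]

lemma pow_mul_weightedJet_le (hr : 0 ≤ r) (i m : ℕ) :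
    r ^ i * weightedJet r u p m ≤ weightedJet r u p (i + m) := by
  induction i with
  | zero => simp
  | succ i ih =>
    calc r ^ (i + 1) * weightedJet r u p m = r * (r ^ i * weightedJet r u p m) := by ring
      _ ≤ r * weightedJet r u p (i + m) := by gcongr
      _ = lowerJet r u p (i + m + 1) := mul_weightedJet _
      _ ≤ weightedJet r u p (i + 1 + m) := by
          rw [add_right_comm]
          exact le_add_of_nonneg_left (norm_nonneg _)

lemma pow_succ_mul_weightedJet_le (hr : 0 ≤ r) (i m : ℕ) :
    r ^ (i + 1) * weightedJet r u p m ≤ lowerJet r u p (i + m + 1) := by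
  rw [pow_succ', mul_assoc, ← mul_weightedJet]
  gcongr
  exact pow_mul_weightedJet_le hr i m

end Jet

/-- The coefficients by which the fields perturb coordinate derivatives: with indices modulo `3`,
the letter `i` is `∂_{i-1} + fieldCoeff i · ∂_{i+1}`. The third coefficient, that of the letter
`∂_y`, is `0`. -/
def fieldCoeff (ε : ℝ) (z0 s0 : ℝ³ → ℝ) : Fin 3 → ℝ³ → ℝ :=
  ![fun p => ε * z0 p, fun p => ε * s0 p, 0]

lemma fieldLetter_eq (ε : ℝ) (z0 s0 g : ℝ³ → ℝ) (i : Fin 3) :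
    fieldLetter ε z0 s0 i g =
      fun p => pd (i - 1) g p + fieldCoeff ε z0 s0 i p * pd (i + 1) g p := by
  funext p
  fin_cases i
  · rfl
  · rfl
  · simp [fieldLetter, fieldCoeff]

section Fields

variable {ε : ℝ} {z0 s0 u : ℝ³ → ℝ}

lemma contDiff_fieldLetter (hc : ∀ i, ContDiff ℝ ∞ (fieldCoeff ε z0 s0 i)) {g : ℝ³ → ℝ}
    (hg : ContDiff ℝ ∞ g) (i : Fin 3) : ContDiff ℝ ∞ (fieldLetter ε z0 s0 i g) := by
  rw [fieldLetter_eq]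
  exact (contDiff_pd hg _).add ((hc i).mul (contDiff_pd hg _))

lemma contDiff_fieldComp (hc : ∀ i, ContDiff ℝ ∞ (fieldCoeff ε z0 s0 i)) (hu : ContDiff ℝ ∞ u) :
    ∀ {n : ℕ} (w : Fin n → Fin 3), ContDiff ℝ ∞ (fieldComp ε z0 s0 w u)
  | 0, _ => hu
  | _ + 1, w => contDiff_fieldLetter hc (contDiff_fieldComp hc hu fun j => w j.succ) (w 0)

lemma iteratedFDeriv_fieldLetter (hc : ∀ i, ContDiff ℝ ∞ (fieldCoeff ε z0 s0 i)) {g : ℝ³ → ℝ}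
    (hg : ContDiff ℝ ∞ g) (i : Fin 3) (k : ℕ) (p : ℝ³) :
    iteratedFDeriv ℝ k (fieldLetter ε z0 s0 i g) p = iteratedFDeriv ℝ k (pd (i - 1) g) p +
      iteratedFDeriv ℝ k (fun x => fieldCoeff ε z0 s0 i x * pd (i + 1) g x) p := by
  have hk : (k : ℕ∞ω) ≤ ∞ := mod_cast le_top
  rw [fieldLetter_eq, fun_iteratedFDeriv_add_apply ((contDiff_pd hg _).of_le hk).contDiffAt
    (((hc i).mul (contDiff_pd hg _)).of_le hk).contDiffAt]

variable {N : ℕ} {K r : ℝ} {p : ℝ³}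

lemma norm_iteratedFDeriv_fieldComp_le (hc : ∀ i, ContDiff ℝ ∞ (fieldCoeff ε z0 s0 i))
    (hu : ContDiff ℝ ∞ u) (hK : 0 ≤ K) (hr : 0 ≤ r)
    (hcK : ∀ i, ∀ l ≤ N, ‖iteratedFDeriv ℝ l (fieldCoeff ε z0 s0 i) p‖ ≤ K * r ^ l) {n : ℕ}
    (w : Fin n → Fin 3) {k : ℕ} (hk : k + n ≤ N) :
    ‖iteratedFDeriv ℝ k (fieldComp ε z0 s0 w u) p‖ ≤
      (1 + 2 ^ N * K) ^ n * weightedJet r u p (k + n) := by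
  induction n generalizing k with
  | zero => simpa [fieldComp] using norm_iteratedFDeriv_le_weightedJet hr k
  | succ n ih =>
    set g := fieldComp ε z0 s0 (fun j => w j.succ) u
    have hg : ContDiff ℝ ∞ g := contDiff_fieldComp hc hu _
    have hpd (i : Fin 3) {j : ℕ} (hj : j ≤ k) : ‖iteratedFDeriv ℝ j (pd i g) p‖ ≤
        (1 + 2 ^ N * K) ^ n * weightedJet r u p (j + (n + 1)) := by
      have hle := (norm_iteratedFDeriv_pd_le hg i j p).trans
        (ih (fun j => w j.succ) (k := j + 1) (by lia))
      rwa [add_right_comm] at hle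
    have hprod (i : Fin 3) :
        ‖iteratedFDeriv ℝ k (fun x => fieldCoeff ε z0 s0 i x * pd (i + 1) g x) p‖ ≤
          2 ^ k * (K * ((1 + 2 ^ N * K) ^ n * weightedJet r u p (k + (n + 1)))) := by
      refine norm_iteratedFDeriv_mul_le_of_forall (hc i) (contDiff_pd hg _) p k fun l j hlj => ?_
      calc _ ≤ K * r ^ l * ((1 + 2 ^ N * K) ^ n * weightedJet r u p (j + (n + 1))) := by
            gcongr
            · exact hcK i l (by lia)
            · exact hpd _ (by lia)
        _ = K * ((1 + 2 ^ N * K) ^ n * (r ^ l * weightedJet r u p (j + (n + 1)))) := by ring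
        _ ≤ _ := by
            gcongr
            rw [← hlj, add_assoc]
            exact pow_mul_weightedJet_le hr l _
    have hW := weightedJet_nonneg (u := u) (p := p) hr (k + (n + 1))
    calc _ ≤ ‖iteratedFDeriv ℝ k (pd (w 0 - 1) g) p‖ +
          ‖iteratedFDeriv ℝ k (fun x => fieldCoeff ε z0 s0 (w 0) x * pd (w 0 + 1) g x) p‖ := by
          rw [fieldComp, iteratedFDeriv_fieldLetter hc hg]
          exact norm_add_le _ _
      _ ≤ (1 + 2 ^ N * K) ^ n * weightedJet r u p (k + (n + 1)) +
          2 ^ N * (K * ((1 + 2 ^ N * K) ^ n * weightedJet r u p (k + (n + 1)))) := by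
          refine add_le_add (hpd _ le_rfl) ((hprod _).trans ?_)
          gcongr
          · norm_num
          · lia
      _ = _ := by ring

lemma norm_iteratedFDeriv_fieldCoeff_mul_pd_le
    (hc : ∀ i, ContDiff ℝ ∞ (fieldCoeff ε z0 s0 i)) (hu : ContDiff ℝ ∞ u) (hK : 0 ≤ K)
    (hr : 0 ≤ r) (hcK : ∀ i, ∀ l ≤ N, ‖iteratedFDeriv ℝ l (fieldCoeff ε z0 s0 i) p‖ ≤ K * r ^ l)
    {n : ℕ} (w : Fin n → Fin 3) {k : ℕ} (hk : k + 1 + n ≤ N) (i m : Fin 3) :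
    ‖iteratedFDeriv ℝ k
        (fun x => fieldCoeff ε z0 s0 i x * pd m (fieldComp ε z0 s0 w u) x) p‖ ≤
      2 ^ N * K * (‖iteratedFDeriv ℝ k (pd m (fieldComp ε z0 s0 w u)) p‖ +
        (1 + 2 ^ N * K) ^ n * lowerJet r u p (k + 1 + n)) := by
  set g := fieldComp ε z0 s0 w u
  have hg : ContDiff ℝ ∞ g := contDiff_fieldComp hc hu w
  have hV := lowerJet_nonneg (u := u) (p := p) hr (k + 1 + n)
  have hterm (l j) (hlj : l + j = k) :
      ‖iteratedFDeriv ℝ l (fieldCoeff ε z0 s0 i) p‖ * ‖iteratedFDeriv ℝ j (pd m g) p‖ ≤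
        K * (‖iteratedFDeriv ℝ k (pd m g) p‖ +
          (1 + 2 ^ N * K) ^ n * lowerJet r u p (k + 1 + n)) := by
    cases l with
    | zero =>
      obtain rfl : j = k := by lia
      have hc0 := hcK i 0 (by lia)
      rw [pow_zero, mul_one] at hc0
      gcongr
      exact le_add_of_nonneg_right (by positivity)
    | succ l =>
      calc _ ≤ K * r ^ (l + 1) * ((1 + 2 ^ N * K) ^ n * weightedJet r u p (j + 1 + n)) := by
            gcongr
            · exact hcK i _ (by lia)
            · exact (norm_iteratedFDeriv_pd_le hg m j p).trans
                (norm_iteratedFDeriv_fieldComp_le hc hu hK hr hcK w (by lia))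
        _ = K * ((1 + 2 ^ N * K) ^ n * (r ^ (l + 1) * weightedJet r u p (j + 1 + n))) := by ring
        _ ≤ K * ((1 + 2 ^ N * K) ^ n * lowerJet r u p (k + 1 + n)) := by
            gcongr
            rw [show k + 1 + n = l + (j + 1 + n) + 1 by lia]
            exact pow_succ_mul_weightedJet_le hr l _
        _ ≤ _ := by
            gcongr
            exact le_add_of_nonneg_left (norm_nonneg _)
  refine (norm_iteratedFDeriv_mul_le_of_forall (hc i) (contDiff_pd hg m) p k hterm).trans ?_
  rw [mul_assoc]
  gcongr
  · norm_num
  · lia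

lemma norm_iteratedFDeriv_succ_fieldComp_le
    (hc : ∀ i, ContDiff ℝ ∞ (fieldCoeff ε z0 s0 i)) (hu : ContDiff ℝ ∞ u) (hK : 0 ≤ K)
    (hr : 0 ≤ r) (hcK : ∀ i, ∀ l ≤ N, ‖iteratedFDeriv ℝ l (fieldCoeff ε z0 s0 i) p‖ ≤ K * r ^ l)
    {n : ℕ} (w : Fin n → Fin 3) {k : ℕ} (hk : k + 1 + n ≤ N) {Y : ℝ}
    (hY : ∀ i, ‖iteratedFDeriv ℝ k (fieldLetter ε z0 s0 i (fieldComp ε z0 s0 w u)) p‖ ≤ Y) :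
    ‖iteratedFDeriv ℝ (k + 1) (fieldComp ε z0 s0 w u) p‖ ≤
      3 * (1 + 2 ^ N * K) ^ 2 * (Y + (1 + 2 ^ N * K) ^ n * lowerJet r u p (k + 1 + n)) := by
  set g := fieldComp ε z0 s0 w u
  have hg : ContDiff ℝ ∞ g := contDiff_fieldComp hc hu w
  set V := (1 + 2 ^ N * K) ^ n * lowerJet r u p (k + 1 + n)
  have hV : 0 ≤ V := mul_nonneg (by positivity) (lowerJet_nonneg hr _)
  have hY0 : 0 ≤ Y := (norm_nonneg _).trans (hY 0)
  have hpd (i : Fin 3) {X : ℝ} (hX : ‖iteratedFDeriv ℝ k (pd (i + 1) g) p‖ ≤ X) :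
      ‖iteratedFDeriv ℝ k (pd (i - 1) g) p‖ ≤ Y + 2 ^ N * K * (X + V) := by
    rw [← sub_eq_iff_eq_add.2 (iteratedFDeriv_fieldLetter hc hg i k p)]
    refine (norm_sub_le _ _).trans (add_le_add (hY i) ?_)
    refine (norm_iteratedFDeriv_fieldCoeff_mul_pd_le hc hu hK hr hcK w hk i _).trans ?_
    gcongr
  -- `∂_y` is a letter; then `Z` controls `∂_t` and `S` controls `∂_x`.
  have hy : ‖iteratedFDeriv ℝ k (pd 1 g) p‖ ≤ Y := hY 2
  have ht := hpd 0 hy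
  have hx := hpd 1 ht
  have hsum := norm_iteratedFDeriv_succ_le_sum_pd hg k p
  rw [Fin.sum_univ_three] at hsum
  norm_num at ht hx
  set L := 2 ^ N * K
  have hL : 0 ≤ L := by positivity
  calc _ ≤ _ := hsum
    _ ≤ (Y + L * (Y + L * (Y + V) + V)) + Y + (Y + L * (Y + V)) :=
        add_le_add (add_le_add hx hy) ht
    _ ≤ 3 * (1 + L) ^ 2 * (Y + V) := by nlinarith [mul_nonneg hL hV, mul_nonneg hL hY0]

lemma norm_iteratedFDeriv_fieldComp_le_sum_abs
    (hc : ∀ i, ContDiff ℝ ∞ (fieldCoeff ε z0 s0 i)) (hu : ContDiff ℝ ∞ u) (hK : 0 ≤ K)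
    (hr : 0 ≤ r) (hcK : ∀ i, ∀ l ≤ N, ‖iteratedFDeriv ℝ l (fieldCoeff ε z0 s0 i) p‖ ≤ K * r ^ l)
    {n : ℕ} (w : Fin n → Fin 3) {k : ℕ} (hk : k + n ≤ N) :
    ‖iteratedFDeriv ℝ k (fieldComp ε z0 s0 w u) p‖ ≤ (6 * (1 + 2 ^ N * K) ^ (N + 2)) ^ k *
      (∑ w : Fin (k + n) → Fin 3, |fieldComp ε z0 s0 w u p| + lowerJet r u p (k + n)) := by
  set L := 1 + 2 ^ N * K
  have hL1 : 1 ≤ L := le_add_of_nonneg_right (by positivity)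
  induction k generalizing n with
  | zero =>
    rw [norm_iteratedFDeriv_zero, zero_add, pow_zero, one_mul]
    exact (Finset.single_le_sum (f := fun w : Fin n → Fin 3 => |fieldComp ε z0 s0 w u p|)
      (fun _ _ => abs_nonneg _) (Finset.mem_univ w)).trans
      (le_add_of_nonneg_right (lowerJet_nonneg hr n))
  | succ k ih =>
    set G := ∑ w : Fin (k + 1 + n) → Fin 3, |fieldComp ε z0 s0 w u p|
    set V := lowerJet r u p (k + 1 + n)
    have hV : 0 ≤ V := lowerJet_nonneg hr _
    have hG : 0 ≤ G := Finset.sum_nonneg fun _ _ => abs_nonneg _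
    have hletter (i : Fin 3) :
        ‖iteratedFDeriv ℝ k (fieldLetter ε z0 s0 i (fieldComp ε z0 s0 w u)) p‖ ≤
          (6 * L ^ (N + 2)) ^ k * (G + V) := by
      have h := ih (Fin.cons i w : Fin (n + 1) → Fin 3) (by lia)
      rwa [← add_assoc, add_right_comm] at h
    calc _ ≤ 3 * L ^ 2 * ((6 * L ^ (N + 2)) ^ k * (G + V) + L ^ n * V) :=
          norm_iteratedFDeriv_succ_fieldComp_le hc hu hK hr hcK w hk hletter
      _ ≤ 3 * L ^ 2 * (L ^ N * ((6 * L ^ (N + 2)) ^ k * (G + V)) +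
            L ^ N * ((6 * L ^ (N + 2)) ^ k * (G + V))) := by
          have hone : 1 ≤ (6 * L ^ (N + 2)) ^ k :=
            one_le_pow₀ (by linarith [one_le_pow₀ hL1 (n := N + 2)])
          gcongr 3 * L ^ 2 * (?_ + L ^ ?_ * ?_)
          · exact le_mul_of_one_le_left (by positivity) (one_le_pow₀ hL1)
          · lia
          · exact (le_add_of_nonneg_left hG).trans (le_mul_of_one_le_left (by positivity) hone)
      _ = (6 * L ^ (N + 2)) ^ (k + 1) * (G + V) := by ring

end Fields

/-! ### Integral estimates for the lower-order terms -/

section CellSobolev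

variable {A₀ M : ℝ}

lemma pdComp_const_mul (a : ℝ) (f : ℝ³ → ℝ) :
    ∀ {n : ℕ} (w : Fin n → Fin 3),
      pdComp w (fun p => a * f p) = fun p => a * pdComp w f p
  | 0, _ => rfl
  | _ + 1, w => by
    funext p
    simp only [pdComp, pdComp_const_mul a f, pd, deriv_const_mul_field', mul_ite]

lemma cellSobSq_const_mul (n : ℕ) (a : ℝ) (f : ℝ³ → ℝ) :
    cellSobSq A₀ M n (fun p => a * f p) = a ^ 2 * cellSobSq A₀ M n f := by
  simp only [cellSobSq, pdComp_const_mul, mul_pow, integral_const_mul, Finset.mul_sum]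

lemma cellSobSq_mono {m n : ℕ} (hmn : m ≤ n) (u : ℝ³ → ℝ) :
    cellSobSq A₀ M m u ≤ cellSobSq A₀ M n u :=
  Finset.sum_le_sum_of_subset_of_nonneg (Finset.range_mono (by lia)) fun _ _ _ =>
    Finset.sum_nonneg fun _ _ => integral_nonneg fun _ => sq_nonneg _

lemma abs_le_supCell {u : ℝ³ → ℝ} (hu : Continuous u) {p : ℝ³} (hp : p ∈ cell A₀ M) :
    |u p| ≤ supCell A₀ M u :=
  le_csSup (isCompact_cell.bddAbove_image hu.abs.continuousOn) ⟨p, hp, rfl⟩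

lemma supCell_nonneg (u : ℝ³ → ℝ) : 0 ≤ supCell A₀ M u :=
  Real.sSup_nonneg (by rintro _ ⟨p, -, rfl⟩; exact abs_nonneg _)

lemma integral_cell_add_sq_le {f g : ℝ³ → ℝ} (hf : Continuous f) (hg : Continuous g) :
    ∫ p in cell A₀ M, (f p + g p) ^ 2 ≤
      2 * ((∫ p in cell A₀ M, f p ^ 2) + ∫ p in cell A₀ M, g p ^ 2) := by
  have hf2 : Continuous fun p => f p ^ 2 := hf.pow 2
  have hg2 : Continuous fun p => g p ^ 2 := hg.pow 2
  rw [← integral_add (integrableOn_cell hf2) (integrableOn_cell hg2), ← integral_const_mul]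
  exact setIntegral_cell_mono ((hf.add hg).pow 2) ((hf2.add hg2).const_mul 2) fun _ _ => add_sq_le

lemma integral_cell_sum_sq_le {ι : Type*} (s : Finset ι) {g : ι → ℝ³ → ℝ}
    (hg : ∀ i ∈ s, Continuous (g i)) :
    ∫ p in cell A₀ M, (∑ i ∈ s, g i p) ^ 2 ≤ s.card * ∑ i ∈ s, ∫ p in cell A₀ M, g i p ^ 2 := by
  have hsq (i) (hi : i ∈ s) : Continuous fun p => g i p ^ 2 := (hg i hi).pow 2
  rw [← integral_finsetSum _ fun i hi => integrableOn_cell (hsq i hi), ← integral_const_mul]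
  exact setIntegral_cell_mono ((continuous_finsetSum _ hg).pow 2)
    ((continuous_finsetSum _ hsq).const_mul _) fun p _ => sq_sum_le_card_mul_sum_sq

lemma integral_norm_iteratedFDeriv_sq_le {u : ℝ³ → ℝ} (hu : ContDiff ℝ ∞ u) (n : ℕ) :
    ∫ p in cell A₀ M, ‖iteratedFDeriv ℝ n u p‖ ^ 2 ≤ 3 ^ n * cellSobSq A₀ M n u := by
  have h := (integral_norm_iteratedFDeriv_rpow_le_derivEnergy le_rfl 2 u).trans
    (derivEnergy_two_le_cellSobSq (A₀ := A₀) (M := M) hu n)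
  simpa only [Real.rpow_two] using h

lemma sum_integral_pdComp_sq_le {u : ℝ³ → ℝ} (hu : ContDiff ℝ ∞ u) (n : ℕ) :
    ∑ w : Fin n → Fin 3, ∫ p in cell A₀ M, pdComp w u p ^ 2 ≤
      3 ^ n * ∫ p in cell A₀ M, ‖iteratedFDeriv ℝ n u p‖ ^ 2 := by
  have hword (w : Fin n → Fin 3) : ∫ p in cell A₀ M, pdComp w u p ^ 2 ≤
      ∫ p in cell A₀ M, ‖iteratedFDeriv ℝ n u p‖ ^ 2 :=
    setIntegral_cell_mono ((contDiff_pdComp hu w).continuous.pow 2)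
      ((continuous_norm_iteratedFDeriv hu n).pow 2) fun p _ =>
        sq_le_sq' (neg_le_of_abs_le (abs_pdComp_le_norm_iteratedFDeriv hu w p))
          (le_of_abs_le (abs_pdComp_le_norm_iteratedFDeriv hu w p))
  exact (Finset.sum_le_card_nsmul _ _ _ fun w _ => hword w).trans_eq (by simp)

lemma exists_sq_pow_mul_le {j n : ℕ} (hj : 0 < j) (hjn : j < n) {δ : ℝ} (hδ : 0 < δ) :
    ∃ C : ℝ, 0 < C ∧ ∀ a r : ℝ, 0 ≤ a → 0 ≤ r →
      (r ^ (n - j) * a) ^ 2 ≤ δ * a ^ (2 * n / j : ℝ) + C * r ^ (2 * n) := by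
  have hj' : (0 : ℝ) < j := mod_cast hj
  have hjn' : (0 : ℝ) < n - j := sub_pos.2 (mod_cast hjn)
  have hn' : (0 : ℝ) < n := by linarith
  have hconj : (n / j : ℝ).HolderConjugate (n / (n - j)) := by
    refine ⟨?_, by positivity, by positivity⟩
    field_simp
    ring
  obtain ⟨C, hC, hyoung⟩ := exists_mul_le_mul_rpow_add_mul_rpow hconj hδ
  refine ⟨C, hC, fun a r ha hr => ?_⟩
  have h := hyoung (a ^ 2) (r ^ (2 * (n - j))) (by positivity) (by positivity)
  rw [← Real.rpow_natCast_mul ha, ← Real.rpow_natCast_mul hr] at h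
  convert h using 3
  · ring
  · push_cast
    rw [mul_div_assoc]
  · rw [← Real.rpow_natCast]
    push_cast [Nat.cast_sub hjn.le]
    field_simp

lemma exists_integral_pow_mul_norm_iteratedFDeriv_sq_le_of_abs_le_one (hAM : -A₀ < M) {j n : ℕ}
    (hjn : j < n) {δ : ℝ} (hδ : 0 < δ) :
    ∃ C : ℝ, 0 < C ∧ ∀ f : ℝ³ → ℝ, ContDiff ℝ ∞ f → (∀ x ∈ cell A₀ M, |f x| ≤ 1) →
      ∀ R : ℝ³ → ℝ, Continuous R → (∀ p, 0 ≤ R p) →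
        ∫ p in cell A₀ M, (R p ^ (n - j) * ‖iteratedFDeriv ℝ j f p‖) ^ 2 ≤
          δ * cellSobSq A₀ M n f + C * ∫ p in cell A₀ M, R p ^ (2 * n) := by
  have hcont {f R : ℝ³ → ℝ} (hf : ContDiff ℝ ∞ f) (hR : Continuous R) :
      Continuous fun p => (R p ^ (n - j) * ‖iteratedFDeriv ℝ j f p‖) ^ 2 :=
    ((hR.pow _).mul (continuous_norm_iteratedFDeriv hf j)).pow 2
  rcases j.eq_zero_or_pos with rfl | hj
  · refine ⟨1, one_pos, fun f hf hf1 R hR hR0 => ?_⟩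
    rw [one_mul]
    refine (setIntegral_cell_mono (g := fun p => R p ^ (2 * n)) (hcont hf hR) (hR.pow _)
      fun p hp => ?_).trans (le_add_of_nonneg_left (mul_nonneg hδ.le (cellSobSq_nonneg n f)))
    rw [norm_iteratedFDeriv_zero, Nat.sub_zero, mul_pow, ← pow_mul, mul_comm n 2]
    exact mul_le_of_le_one_right (pow_nonneg (hR0 p) _)
      (pow_le_one₀ (norm_nonneg _) (hf1 p hp))
  obtain ⟨B, hB, hinterp⟩ := exists_integral_norm_iteratedFDeriv_rpow_le_cellSobSq hAM n zero_le_one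
  obtain ⟨C, hC, hyoung⟩ := exists_sq_pow_mul_le hj hjn (div_pos hδ hB)
  refine ⟨C, hC, fun f hf hf1 R hR hR0 => ?_⟩
  have hDpow := (continuous_norm_iteratedFDeriv_rpow hf j (e := 2 * n / j)
    (by positivity)).const_mul (δ / B)
  have hRpow : Continuous fun p => C * R p ^ (2 * n) := (hR.pow _).const_mul C
  calc _ ≤ ∫ p in cell A₀ M, (δ / B * ‖iteratedFDeriv ℝ j f p‖ ^ (2 * n / j : ℝ) +
          C * R p ^ (2 * n)) :=
        setIntegral_cell_mono (hcont hf hR) (hDpow.add hRpow)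
          fun p _ => hyoung _ _ (norm_nonneg _) (hR0 p)
    _ = δ / B * (∫ p in cell A₀ M, ‖iteratedFDeriv ℝ j f p‖ ^ (2 * n / j : ℝ)) +
          C * ∫ p in cell A₀ M, R p ^ (2 * n) := by
        rw [integral_add (integrableOn_cell hDpow) (integrableOn_cell hRpow),
          integral_const_mul, integral_const_mul]
    _ ≤ δ / B * (B * cellSobSq A₀ M n f) + C * ∫ p in cell A₀ M, R p ^ (2 * n) := by
        gcongr
        exact hinterp f hf hf1 j hj hjn.le
    _ = _ := by field_simp

lemma exists_integral_pow_mul_norm_iteratedFDeriv_sq_le (hAM : -A₀ < M) {j n : ℕ}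
    (hjn : j < n) {δ : ℝ} (hδ : 0 < δ) :
    ∃ C : ℝ, 0 < C ∧ ∀ u : ℝ³ → ℝ, ContDiff ℝ ∞ u →
      ∀ R : ℝ³ → ℝ, Continuous R → (∀ p, 0 ≤ R p) →
        ∫ p in cell A₀ M, (R p ^ (n - j) * ‖iteratedFDeriv ℝ j u p‖) ^ 2 ≤
          δ * cellSobSq A₀ M n u + C * supCell A₀ M u ^ 2 * ∫ p in cell A₀ M, R p ^ (2 * n) := by
  obtain ⟨C, hC, hunit⟩ :=
    exists_integral_pow_mul_norm_iteratedFDeriv_sq_le_of_abs_le_one hAM hjn hδ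
  refine ⟨C, hC, fun u hu R hR hR0 => ?_⟩
  have hscaled (m : ℝ) (hm : supCell A₀ M u < m) :
      ∫ p in cell A₀ M, (R p ^ (n - j) * ‖iteratedFDeriv ℝ j u p‖) ^ 2 ≤
        δ * cellSobSq A₀ M n u + C * m ^ 2 * ∫ p in cell A₀ M, R p ^ (2 * n) := by
    have hm0 : 0 < m := (supCell_nonneg u).trans_lt hm
    have h := hunit (fun p => m⁻¹ * u p) (contDiff_const.mul hu) (fun x hx => by
      rw [abs_mul, abs_of_pos (inv_pos.2 hm0), inv_mul_le_one₀ hm0]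
      exact (abs_le_supCell hu.continuous hx).trans hm.le) R hR hR0
    have hD (p : ℝ³) : iteratedFDeriv ℝ j (fun p => m⁻¹ * u p) p = m⁻¹ • iteratedFDeriv ℝ j u p :=
      iteratedFDeriv_const_smul_apply' (a := m⁻¹) (hu.of_le (mod_cast le_top)).contDiffAt
    simp only [hD, norm_smul, norm_inv, Real.norm_of_nonneg hm0.le, cellSobSq_const_mul,
      mul_left_comm _ m⁻¹, mul_pow m⁻¹, integral_const_mul] at h
    calc _ = m ^ 2 * (m⁻¹ ^ 2 *
          ∫ p in cell A₀ M, (R p ^ (n - j) * ‖iteratedFDeriv ℝ j u p‖) ^ 2) := by field_simp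
      _ ≤ _ := mul_le_mul_of_nonneg_left h (sq_nonneg m)
      _ = _ := by field_simp
  -- `m` decreases to `supCell A₀ M u`, which may vanish and so cannot be divided by.
  have hlim : Continuous fun m : ℝ =>
    δ * cellSobSq A₀ M n u + C * m ^ 2 * ∫ p in cell A₀ M, R p ^ (2 * n) := by fun_prop
  exact ge_of_tendsto hlim.continuousWithinAt.tendsto
    (eventually_nhdsWithin_of_forall (s := Set.Ioi _) hscaled)

lemma continuous_lowerJet {R : ℝ³ → ℝ} (hR : Continuous R) {u : ℝ³ → ℝ} (hu : ContDiff ℝ ∞ u)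
    (n : ℕ) : Continuous fun p => lowerJet (R p) u p n :=
  continuous_finsetSum _ fun j _ => (hR.pow _).mul (continuous_norm_iteratedFDeriv hu j)

lemma exists_integral_lowerJet_sq_le (hAM : -A₀ < M) {n : ℕ} (hn : 0 < n) {δ : ℝ} (hδ : 0 < δ) :
    ∃ C : ℝ, 0 < C ∧ ∀ u : ℝ³ → ℝ, ContDiff ℝ ∞ u →
      ∀ R : ℝ³ → ℝ, Continuous R → (∀ p, 0 ≤ R p) →
        ∫ p in cell A₀ M, lowerJet (R p) u p n ^ 2 ≤
          δ * cellSobSq A₀ M n u + C * supCell A₀ M u ^ 2 * ∫ p in cell A₀ M, R p ^ (2 * n) := by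
  have hn' : (0 : ℝ) < n := mod_cast hn
  obtain ⟨C, hC, hterm⟩ := exists_forall_of_monotone (Finset.range n)
    (P := fun j C => ∀ u : ℝ³ → ℝ, ContDiff ℝ ∞ u → ∀ R : ℝ³ → ℝ, Continuous R →
      (∀ p, 0 ≤ R p) → ∫ p in cell A₀ M, (R p ^ (n - j) * ‖iteratedFDeriv ℝ j u p‖) ^ 2 ≤
        δ / n ^ 2 * cellSobSq A₀ M n u +
          C * supCell A₀ M u ^ 2 * ∫ p in cell A₀ M, R p ^ (2 * n))
    (fun j C C' hCC' h u hu R hR hR0 => (h u hu R hR hR0).trans (by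
      have : 0 ≤ ∫ p in cell A₀ M, R p ^ (2 * n) := integral_nonneg fun p => pow_nonneg (hR0 p) _
      gcongr))
    fun j hj => (exists_integral_pow_mul_norm_iteratedFDeriv_sq_le hAM (Finset.mem_range.1 hj)
      (div_pos hδ (pow_pos hn' 2))).imp fun _ => And.right
  refine ⟨n ^ 2 * C, by positivity, fun u hu R hR hR0 => ?_⟩
  calc ∫ p in cell A₀ M, lowerJet (R p) u p n ^ 2
      ≤ n * ∑ j ∈ Finset.range n,
          ∫ p in cell A₀ M, (R p ^ (n - j) * ‖iteratedFDeriv ℝ j u p‖) ^ 2 := by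
        have h := integral_cell_sum_sq_le (A₀ := A₀) (M := M) (Finset.range n) fun j _ =>
          (hR.pow (n - j)).mul (continuous_norm_iteratedFDeriv hu j)
        rwa [Finset.card_range] at h
    _ ≤ n * ∑ _j ∈ Finset.range n, (δ / n ^ 2 * cellSobSq A₀ M n u +
          C * supCell A₀ M u ^ 2 * ∫ p in cell A₀ M, R p ^ (2 * n)) := by
        gcongr with j hj
        exact hterm j hj u hu R hR hR0
    _ = _ := by
        rw [Finset.sum_const, Finset.card_range, nsmul_eq_mul]
        field_simp

end CellSobolev

/-- The inverse of the length scale on which the functions `c i` vary near `p`, as measured by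
their derivatives of orders `1, …, n`. -/
def localRadius {ι : Type*} [Fintype ι] (n : ℕ) (c : ι → ℝ³ → ℝ) (p : ℝ³) : ℝ :=
  ∑ k ∈ Finset.univ ×ˢ Finset.Icc 1 n, ‖iteratedFDeriv ℝ k.2 (c k.1) p‖ ^ (1 / k.2 : ℝ)

section LocalRadius

variable {A₀ M : ℝ} {ι : Type*} [Fintype ι] {c : ι → ℝ³ → ℝ}

lemma localRadius_nonneg (n : ℕ) (c : ι → ℝ³ → ℝ) (p : ℝ³) : 0 ≤ localRadius n c p :=
  Finset.sum_nonneg fun _ _ => by positivity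

lemma continuous_localRadius (hc : ∀ i, ContDiff ℝ ∞ (c i)) (n : ℕ) :
    Continuous (localRadius n c) :=
  continuous_finsetSum _ fun _ _ => continuous_norm_iteratedFDeriv_rpow (hc _) _ (by positivity)

lemma norm_iteratedFDeriv_le_localRadius_pow {n l : ℕ} (hl : 1 ≤ l) (hln : l ≤ n) (i : ι)
    (p : ℝ³) : ‖iteratedFDeriv ℝ l (c i) p‖ ≤ localRadius n c p ^ l := by
  calc ‖iteratedFDeriv ℝ l (c i) p‖ = (‖iteratedFDeriv ℝ l (c i) p‖ ^ (1 / l : ℝ)) ^ l := by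
        rw [one_div, Real.rpow_inv_natCast_pow (norm_nonneg _) (by lia)]
    _ ≤ localRadius n c p ^ l := by
        gcongr
        exact Finset.single_le_sum
          (f := fun k : ι × ℕ => ‖iteratedFDeriv ℝ k.2 (c k.1) p‖ ^ (1 / k.2 : ℝ))
          (fun _ _ => by positivity) (by simp [hl, hln] : (i, l) ∈ Finset.univ ×ˢ Finset.Icc 1 n)

lemma norm_iteratedFDeriv_le_max_mul_localRadius_pow {K : ℝ} {p : ℝ³} (hcK : ∀ i, |c i p| ≤ K)
    {n : ℕ} (i : ι) (l : ℕ) (hln : l ≤ n) :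
    ‖iteratedFDeriv ℝ l (c i) p‖ ≤ max K 1 * localRadius n c p ^ l := by
  rcases l.eq_zero_or_pos with rfl | hl
  · simpa using Or.inl (hcK i)
  · exact (norm_iteratedFDeriv_le_localRadius_pow hl hln i p).trans
      (le_mul_of_one_le_left (pow_nonneg (localRadius_nonneg n c p) l) (le_max_right _ _))

lemma exists_integral_localRadius_pow_le (ι : Type*) [Fintype ι] (hAM : -A₀ < M) {n : ℕ}
    (hn : 0 < n) {K : ℝ} (hK : 0 ≤ K) :
    ∃ C : ℝ, 0 < C ∧ ∀ c : ι → ℝ³ → ℝ, (∀ i, ContDiff ℝ ∞ (c i)) →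
      (∀ i, ∀ x ∈ cell A₀ M, |c i x| ≤ K) →
        ∫ p in cell A₀ M, localRadius n c p ^ (2 * n) ≤ C * ∑ i, cellSobSq A₀ M n (c i) := by
  obtain ⟨C, hC, hinterp⟩ := exists_integral_norm_iteratedFDeriv_rpow_le_cellSobSq hAM n hK
  set s : Finset (ι × ℕ) := Finset.univ ×ˢ Finset.Icc 1 n with hs
  refine ⟨(s.card : ℝ) ^ (2 * n - 1 : ℝ) * (n * C) + 1, by positivity, fun c hc hcK => ?_⟩
  have hn' : (1 : ℝ) ≤ n := mod_cast hn
  have hterm (k) (hk : k ∈ s) :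
      ∫ p in cell A₀ M, (‖iteratedFDeriv ℝ k.2 (c k.1) p‖ ^ (1 / k.2 : ℝ)) ^ (2 * n : ℝ) ≤
        C * cellSobSq A₀ M n (c k.1) := by
    obtain ⟨hk1, hkn⟩ := Finset.mem_Icc.1 (Finset.mem_product.1 hk).2
    simp only [← Real.rpow_mul (norm_nonneg _), one_div_mul_eq_div]
    exact hinterp _ (hc _) (hcK _) k.2 hk1 hkn
  calc ∫ p in cell A₀ M, localRadius n c p ^ (2 * n)
      = ∫ p in cell A₀ M, localRadius n c p ^ (2 * n : ℝ) := by
        simp only [← Real.rpow_natCast, Nat.cast_mul, Nat.cast_ofNat]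
    _ ≤ (s.card : ℝ) ^ (2 * n - 1 : ℝ) * ∑ k ∈ s,
          ∫ p in cell A₀ M, (‖iteratedFDeriv ℝ k.2 (c k.1) p‖ ^ (1 / k.2 : ℝ)) ^ (2 * n : ℝ) :=
        integral_cell_sum_rpow_le s (by linarith)
          (fun k _ => continuous_norm_iteratedFDeriv_rpow (hc _) _ (by positivity))
          fun _ _ _ => by positivity
    _ ≤ (s.card : ℝ) ^ (2 * n - 1 : ℝ) * ∑ k ∈ s, C * cellSobSq A₀ M n (c k.1) := by
        gcongr with k hk
        exact hterm k hk
    _ = (s.card : ℝ) ^ (2 * n - 1 : ℝ) * (n * C) * ∑ i, cellSobSq A₀ M n (c i) := by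
        rw [hs, Finset.sum_product]
        simp only [Finset.sum_const, Nat.card_Icc, Nat.add_sub_cancel, nsmul_eq_mul,
          ← Finset.mul_sum]
        ring
    _ ≤ _ := by
        gcongr
        · exact Finset.sum_nonneg fun _ _ => cellSobSq_nonneg _ _
        · linarith

/-- The error in the tame comparison of order `n`: the functions `c i` enter through their
Sobolev norms and `u` only through its supremum. -/
def tameRemainder (A₀ M : ℝ) (n : ℕ) (c : ι → ℝ³ → ℝ) (u : ℝ³ → ℝ) : ℝ :=
  supCell A₀ M u ^ 2 * ∑ i, cellSobSq A₀ M n (c i)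

lemma tameRemainder_nonneg (n : ℕ) (c : ι → ℝ³ → ℝ) (u : ℝ³ → ℝ) :
    0 ≤ tameRemainder A₀ M n c u :=
  mul_nonneg (sq_nonneg _) (Finset.sum_nonneg fun _ _ => cellSobSq_nonneg _ _)

lemma tameRemainder_mono {m n : ℕ} (hmn : m ≤ n) (c : ι → ℝ³ → ℝ) (u : ℝ³ → ℝ) :
    tameRemainder A₀ M m c u ≤ tameRemainder A₀ M n c u :=
  mul_le_mul_of_nonneg_left (Finset.sum_le_sum fun _ _ => cellSobSq_mono hmn _) (sq_nonneg _)

lemma exists_integral_lowerJet_localRadius_sq_le (ι : Type*) [Fintype ι] (hAM : -A₀ < M) (n : ℕ)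
    {K : ℝ} (hK : 0 ≤ K) {δ : ℝ} (hδ : 0 < δ) :
    ∃ C : ℝ, 0 < C ∧ ∀ c : ι → ℝ³ → ℝ, (∀ i, ContDiff ℝ ∞ (c i)) →
      (∀ i, ∀ x ∈ cell A₀ M, |c i x| ≤ K) → ∀ u : ℝ³ → ℝ, ContDiff ℝ ∞ u →
        ∫ p in cell A₀ M, lowerJet (localRadius n c p) u p n ^ 2 ≤
          δ * cellSobSq A₀ M n u + C * tameRemainder A₀ M n c u := by
  rcases n.eq_zero_or_pos with rfl | hn
  · exact ⟨1, one_pos, fun c _ _ u _ => by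
      simpa [lowerJet] using add_nonneg
        (mul_nonneg hδ.le (cellSobSq_nonneg (A₀ := A₀) (M := M) 0 u))
        (tameRemainder_nonneg (A₀ := A₀) (M := M) 0 c u)⟩
  obtain ⟨B, hB, hradius⟩ := exists_integral_localRadius_pow_le ι hAM hn hK
  obtain ⟨C, hC, hjet⟩ := exists_integral_lowerJet_sq_le hAM hn hδ
  refine ⟨C * B, by positivity, fun c hc hcK u hu => ?_⟩
  calc _ ≤ δ * cellSobSq A₀ M n u +
          C * supCell A₀ M u ^ 2 * ∫ p in cell A₀ M, localRadius n c p ^ (2 * n) :=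
        hjet u hu _ (continuous_localRadius hc n) (localRadius_nonneg n c)
    _ ≤ δ * cellSobSq A₀ M n u +
          C * supCell A₀ M u ^ 2 * (B * ∑ i, cellSobSq A₀ M n (c i)) := by
        gcongr
        exact hradius c hc hcK
    _ = _ := by
        rw [tameRemainder]
        ring

end LocalRadius

/-! ### Comparison of the norms -/

section Comparison

variable {A₀ M : ℝ}

lemma abs_fieldComp_le_weightedJet_localRadius {n : ℕ} {K ε : ℝ} {z0 s0 u : ℝ³ → ℝ}
    (hc : ∀ i, ContDiff ℝ ∞ (fieldCoeff ε z0 s0 i)) (hu : ContDiff ℝ ∞ u) {p : ℝ³}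
    (hcK : ∀ i, |fieldCoeff ε z0 s0 i p| ≤ K) (w : Fin n → Fin 3) :
    |fieldComp ε z0 s0 w u p| ≤ (1 + 2 ^ n * max K 1) ^ n *
      weightedJet (localRadius n (fieldCoeff ε z0 s0) p) u p n := by
  have h := norm_iteratedFDeriv_fieldComp_le hc hu (le_max_of_le_right zero_le_one)
    (localRadius_nonneg n _ p) (norm_iteratedFDeriv_le_max_mul_localRadius_pow hcK) w
    (zero_add n).le
  rwa [norm_iteratedFDeriv_zero, Real.norm_eq_abs, zero_add] at h

lemma exists_integral_fieldComp_sq_le (hAM : -A₀ < M) (n : ℕ) {K : ℝ} (hK : 0 ≤ K) :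
    ∃ C : ℝ, 0 < C ∧ ∀ (ε : ℝ) (z0 s0 u : ℝ³ → ℝ), (∀ i, ContDiff ℝ ∞ (fieldCoeff ε z0 s0 i)) →
      (∀ i, ∀ x ∈ cell A₀ M, |fieldCoeff ε z0 s0 i x| ≤ K) → ContDiff ℝ ∞ u →
        ∀ w : Fin n → Fin 3, ∫ p in cell A₀ M, fieldComp ε z0 s0 w u p ^ 2 ≤
          C * (cellSobSq A₀ M n u + tameRemainder A₀ M n (fieldCoeff ε z0 s0) u) := by
  obtain ⟨B, hB, hlower⟩ :=
    exists_integral_lowerJet_localRadius_sq_le (Fin 3) hAM n hK one_pos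
  set L := (1 + 2 ^ n * max K 1) ^ n
  refine ⟨L ^ 2 * (2 * (3 ^ n + 1 + B)), by positivity, fun ε z0 s0 u hc hcK hu w => ?_⟩
  set R := localRadius n (fieldCoeff ε z0 s0)
  have hD := continuous_norm_iteratedFDeriv hu n
  have hJ := continuous_lowerJet (continuous_localRadius hc n) hu n
  have hS := cellSobSq_nonneg (A₀ := A₀) (M := M) n u
  have hT := tameRemainder_nonneg (A₀ := A₀) (M := M) n (fieldCoeff ε z0 s0) u
  calc ∫ p in cell A₀ M, fieldComp ε z0 s0 w u p ^ 2
      ≤ ∫ p in cell A₀ M, L ^ 2 * weightedJet (R p) u p n ^ 2 :=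
        setIntegral_cell_mono ((contDiff_fieldComp hc hu w).continuous.pow 2)
          (((hD.add hJ).pow 2).const_mul _) fun p hp => by
            rw [← sq_abs, ← mul_pow]
            gcongr
            exact abs_fieldComp_le_weightedJet_localRadius hc hu (fun i => hcK i p hp) w
    _ ≤ L ^ 2 * (2 * ((∫ p in cell A₀ M, ‖iteratedFDeriv ℝ n u p‖ ^ 2) +
          ∫ p in cell A₀ M, lowerJet (R p) u p n ^ 2)) := by
        rw [integral_const_mul]
        gcongr
        exact integral_cell_add_sq_le hD hJ
    _ ≤ L ^ 2 * (2 * (3 ^ n * cellSobSq A₀ M n u + (1 * cellSobSq A₀ M n u +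
          B * tameRemainder A₀ M n (fieldCoeff ε z0 s0) u))) := by
        gcongr
        · exact integral_norm_iteratedFDeriv_sq_le hu n
        · exact hlower _ hc hcK u hu
    _ ≤ _ := by
        rw [mul_assoc (L ^ 2), mul_assoc 2]
        gcongr
        nlinarith [mul_nonneg hB.le hS, show (0 : ℝ) ≤ 3 ^ n * _ from mul_nonneg (by positivity) hT]

lemma exists_cellFieldSq_le (hAM : -A₀ < M) (s : ℕ) {K : ℝ} (hK : 0 ≤ K) :
    ∃ C : ℝ, 0 < C ∧ ∀ (ε : ℝ) (z0 s0 u : ℝ³ → ℝ), (∀ i, ContDiff ℝ ∞ (fieldCoeff ε z0 s0 i)) →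
      (∀ i, ∀ x ∈ cell A₀ M, |fieldCoeff ε z0 s0 i x| ≤ K) → ContDiff ℝ ∞ u →
        cellFieldSq A₀ M ε z0 s0 s u ≤
          C * (cellSobSq A₀ M s u + tameRemainder A₀ M s (fieldCoeff ε z0 s0) u) := by
  choose C hC hword using fun n => exists_integral_fieldComp_sq_le hAM n hK
  refine ⟨∑ n ∈ Finset.range (s + 1), 3 ^ n * C n,
    Finset.sum_pos (fun n _ => mul_pos (by positivity) (hC n)) (by simp),
    fun ε z0 s0 u hc hcK hu => ?_⟩
  rw [Finset.sum_mul]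
  refine Finset.sum_le_sum fun n hn => ?_
  have hns := Finset.mem_range_succ_iff.1 hn
  calc ∑ w : Fin n → Fin 3, ∫ p in cell A₀ M, fieldComp ε z0 s0 w u p ^ 2
      ≤ 3 ^ n * (C n * (cellSobSq A₀ M n u + tameRemainder A₀ M n (fieldCoeff ε z0 s0) u)) :=
        (Finset.sum_le_card_nsmul _ _ _ fun w _ => hword n ε z0 s0 u hc hcK hu w).trans_eq
          (by simp)
    _ ≤ _ := by
        rw [mul_assoc]
        gcongr
        · exact (hC n).le
        · exact cellSobSq_mono hns u
        · exact tameRemainder_mono hns _ u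

lemma sum_integral_fieldComp_sq_le_cellFieldSq (ε : ℝ) (z0 s0 u : ℝ³ → ℝ) {n : ℕ} :
    ∑ w : Fin n → Fin 3, ∫ p in cell A₀ M, fieldComp ε z0 s0 w u p ^ 2 ≤
      cellFieldSq A₀ M ε z0 s0 n u :=
  Finset.single_le_sum
    (f := fun n => ∑ w : Fin n → Fin 3, ∫ p in cell A₀ M, fieldComp ε z0 s0 w u p ^ 2)
    (fun _ _ => Finset.sum_nonneg fun _ _ => integral_nonneg fun _ => sq_nonneg _)
    (Finset.self_mem_range_succ n)

lemma integral_cell_sum_abs_fieldComp_sq_le {ε : ℝ} {z0 s0 u : ℝ³ → ℝ}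
    (hc : ∀ i, ContDiff ℝ ∞ (fieldCoeff ε z0 s0 i)) (hu : ContDiff ℝ ∞ u) (n : ℕ) :
    ∫ p in cell A₀ M, (∑ w : Fin n → Fin 3, |fieldComp ε z0 s0 w u p|) ^ 2 ≤
      3 ^ n * cellFieldSq A₀ M ε z0 s0 n u := by
  have h := integral_cell_sum_sq_le (A₀ := A₀) (M := M) Finset.univ
    fun (w : Fin n → Fin 3) _ => (contDiff_fieldComp hc hu w).continuous.abs
  simp only [sq_abs, Finset.card_univ, Fintype.card_fun, Fintype.card_fin,
    Nat.cast_pow, Nat.cast_ofNat] at h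
  refine h.trans ?_
  gcongr
  exact sum_integral_fieldComp_sq_le_cellFieldSq ε z0 s0 u

lemma cellFieldSq_nonneg (ε : ℝ) (z0 s0 : ℝ³ → ℝ) (s : ℕ) (u : ℝ³ → ℝ) :
    0 ≤ cellFieldSq A₀ M ε z0 s0 s u :=
  Finset.sum_nonneg fun _ _ => Finset.sum_nonneg fun _ _ => integral_nonneg fun _ => sq_nonneg _

lemma cellFieldSq_mono (ε : ℝ) (z0 s0 : ℝ³ → ℝ) {m n : ℕ} (hmn : m ≤ n) (u : ℝ³ → ℝ) :
    cellFieldSq A₀ M ε z0 s0 m u ≤ cellFieldSq A₀ M ε z0 s0 n u :=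
  Finset.sum_le_sum_of_subset_of_nonneg (Finset.range_mono (by lia)) fun _ _ _ =>
    Finset.sum_nonneg fun _ _ => integral_nonneg fun _ => sq_nonneg _

lemma exists_integral_norm_iteratedFDeriv_sq_le (hAM : -A₀ < M) (n : ℕ) {K : ℝ} (hK : 0 ≤ K)
    {δ : ℝ} (hδ : 0 < δ) :
    ∃ C : ℝ, 0 < C ∧ ∀ (ε : ℝ) (z0 s0 u : ℝ³ → ℝ), (∀ i, ContDiff ℝ ∞ (fieldCoeff ε z0 s0 i)) →
      (∀ i, ∀ x ∈ cell A₀ M, |fieldCoeff ε z0 s0 i x| ≤ K) → ContDiff ℝ ∞ u →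
        ∫ p in cell A₀ M, ‖iteratedFDeriv ℝ n u p‖ ^ 2 ≤ δ * cellSobSq A₀ M n u +
          C * (cellFieldSq A₀ M ε z0 s0 n u +
            tameRemainder A₀ M n (fieldCoeff ε z0 s0) u) := by
  set L := (6 * (1 + 2 ^ n * max K 1) ^ (n + 2)) ^ n
  have hL0 : 0 < L := by positivity
  obtain ⟨B, hB, hlower⟩ := exists_integral_lowerJet_localRadius_sq_le (Fin 3) hAM n hK
    (show 0 < δ / (L ^ 2 * 2) by positivity)
  refine ⟨L ^ 2 * 2 * (3 ^ n + B), by positivity, fun ε z0 s0 u hc hcK hu => ?_⟩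
  set R := localRadius n (fieldCoeff ε z0 s0)
  have hJ := continuous_lowerJet (continuous_localRadius hc n) hu n
  have hsum : Continuous fun p => ∑ w : Fin n → Fin 3, |fieldComp ε z0 s0 w u p| :=
    continuous_finsetSum _ fun w _ => (contDiff_fieldComp hc hu w).continuous.abs
  have hpointwise (p) (hp : p ∈ cell A₀ M) : ‖iteratedFDeriv ℝ n u p‖ ≤
      L * (∑ w : Fin n → Fin 3, |fieldComp ε z0 s0 w u p| + lowerJet (R p) u p n) :=
    norm_iteratedFDeriv_fieldComp_le_sum_abs hc hu (le_max_of_le_left hK)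
      (localRadius_nonneg n _ p)
      (norm_iteratedFDeriv_le_max_mul_localRadius_pow fun i => hcK i p hp) Fin.elim0 le_rfl
  have hF := cellFieldSq_nonneg (A₀ := A₀) (M := M) ε z0 s0 n u
  have hT := tameRemainder_nonneg (A₀ := A₀) (M := M) n (fieldCoeff ε z0 s0) u
  calc ∫ p in cell A₀ M, ‖iteratedFDeriv ℝ n u p‖ ^ 2
      ≤ ∫ p in cell A₀ M, L ^ 2 *
          (∑ w : Fin n → Fin 3, |fieldComp ε z0 s0 w u p| + lowerJet (R p) u p n) ^ 2 :=
        setIntegral_cell_mono ((continuous_norm_iteratedFDeriv hu n).pow 2)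
          (((hsum.add hJ).pow 2).const_mul _) fun p hp => by
            rw [← mul_pow]
            gcongr
            exact hpointwise p hp
    _ ≤ L ^ 2 * (2 * (3 ^ n * cellFieldSq A₀ M ε z0 s0 n u + (δ / (L ^ 2 * 2) *
          cellSobSq A₀ M n u + B * tameRemainder A₀ M n (fieldCoeff ε z0 s0) u))) := by
        rw [integral_const_mul]
        gcongr
        refine (integral_cell_add_sq_le hsum hJ).trans ?_
        gcongr
        · exact integral_cell_sum_abs_fieldComp_sq_le hc hu n
        · exact hlower _ hc hcK u hu
    _ = δ * cellSobSq A₀ M n u + L ^ 2 * 2 * (3 ^ n * cellFieldSq A₀ M ε z0 s0 n u +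
          B * tameRemainder A₀ M n (fieldCoeff ε z0 s0) u) := by
        field_simp
        ring
    _ ≤ _ := by
        rw [mul_assoc (L ^ 2 * 2)]
        gcongr
        nlinarith [mul_nonneg hB.le hF, show (0 : ℝ) ≤ 3 ^ n * _ from mul_nonneg (by positivity) hT]

lemma exists_cellSobSq_succ_le (hAM : -A₀ < M) (n : ℕ) {K : ℝ} (hK : 0 ≤ K) :
    ∃ C : ℝ, 0 < C ∧ ∀ (ε : ℝ) (z0 s0 u : ℝ³ → ℝ), (∀ i, ContDiff ℝ ∞ (fieldCoeff ε z0 s0 i)) →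
      (∀ i, ∀ x ∈ cell A₀ M, |fieldCoeff ε z0 s0 i x| ≤ K) → ContDiff ℝ ∞ u →
        cellSobSq A₀ M (n + 1) u ≤ 2 * cellSobSq A₀ M n u +
          C * (cellFieldSq A₀ M ε z0 s0 (n + 1) u +
            tameRemainder A₀ M (n + 1) (fieldCoeff ε z0 s0) u) := by
  obtain ⟨C, hC, htop⟩ := exists_integral_norm_iteratedFDeriv_sq_le hAM (n + 1) hK
    (show (0 : ℝ) < 1 / (2 * 3 ^ (n + 1)) by positivity)
  refine ⟨2 * (3 ^ (n + 1) * C), by positivity, fun ε z0 s0 u hc hcK hu => ?_⟩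
  have habsorb : cellSobSq A₀ M (n + 1) u ≤ cellSobSq A₀ M n u + cellSobSq A₀ M (n + 1) u / 2 +
      3 ^ (n + 1) * C * (cellFieldSq A₀ M ε z0 s0 (n + 1) u +
        tameRemainder A₀ M (n + 1) (fieldCoeff ε z0 s0) u) := by
    calc _ = cellSobSq A₀ M n u +
            ∑ w : Fin (n + 1) → Fin 3, ∫ p in cell A₀ M, pdComp w u p ^ 2 :=
          Finset.sum_range_succ _ _
      _ ≤ cellSobSq A₀ M n u + 3 ^ (n + 1) * (1 / (2 * 3 ^ (n + 1)) * cellSobSq A₀ M (n + 1) u +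
            C * (cellFieldSq A₀ M ε z0 s0 (n + 1) u +
              tameRemainder A₀ M (n + 1) (fieldCoeff ε z0 s0) u)) := by
          gcongr
          refine (sum_integral_pdComp_sq_le hu (n + 1)).trans ?_
          gcongr
          exact htop ε z0 s0 u hc hcK hu
      _ = _ := by
          field_simp
          ring
  linarith

lemma exists_cellSobSq_le (hAM : -A₀ < M) (s : ℕ) {K : ℝ} (hK : 0 ≤ K) :
    ∃ C : ℝ, 0 < C ∧ ∀ (ε : ℝ) (z0 s0 u : ℝ³ → ℝ), (∀ i, ContDiff ℝ ∞ (fieldCoeff ε z0 s0 i)) →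
      (∀ i, ∀ x ∈ cell A₀ M, |fieldCoeff ε z0 s0 i x| ≤ K) → ContDiff ℝ ∞ u →
        cellSobSq A₀ M s u ≤ C * (cellFieldSq A₀ M ε z0 s0 s u +
          tameRemainder A₀ M s (fieldCoeff ε z0 s0) u) := by
  induction s with
  | zero =>
    refine ⟨1, one_pos, fun ε z0 s0 u _ _ _ => ?_⟩
    have hzero : cellSobSq A₀ M 0 u = cellFieldSq A₀ M ε z0 s0 0 u := by
      simp [cellSobSq, cellFieldSq, pdComp, fieldComp]
    rw [hzero, one_mul]
    exact le_add_of_nonneg_right (tameRemainder_nonneg _ _ _)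
  | succ s ih =>
    obtain ⟨C, hC, ih⟩ := ih
    obtain ⟨B, hB, hstep⟩ := exists_cellSobSq_succ_le hAM s hK
    refine ⟨2 * C + B, by positivity, fun ε z0 s0 u hc hcK hu => ?_⟩
    calc _ ≤ 2 * cellSobSq A₀ M s u + B * (cellFieldSq A₀ M ε z0 s0 (s + 1) u +
            tameRemainder A₀ M (s + 1) (fieldCoeff ε z0 s0) u) := hstep ε z0 s0 u hc hcK hu
      _ ≤ 2 * (C * (cellFieldSq A₀ M ε z0 s0 (s + 1) u +
            tameRemainder A₀ M (s + 1) (fieldCoeff ε z0 s0) u)) +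
            B * (cellFieldSq A₀ M ε z0 s0 (s + 1) u +
            tameRemainder A₀ M (s + 1) (fieldCoeff ε z0 s0) u) := by
          gcongr
          refine (ih ε z0 s0 u hc hcK hu).trans ?_
          gcongr
          · exact cellFieldSq_mono ε z0 s0 s.le_succ u
          · exact tameRemainder_mono s.le_succ _ u
      _ = _ := by ring

lemma tameRemainder_fieldCoeff (ε : ℝ) (z0 s0 u : ℝ³ → ℝ) (s : ℕ) :
    tameRemainder A₀ M s (fieldCoeff ε z0 s0) u = supCell A₀ M u ^ 2 *
      (cellSobSq A₀ M s (fun p => ε * z0 p) + cellSobSq A₀ M s (fun p => ε * s0 p)) := by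
  have hzero : cellSobSq A₀ M s 0 = 0 := by
    simpa [Pi.zero_def] using cellSobSq_const_mul (A₀ := A₀) (M := M) s 0 0
  simp [tameRemainder, Fin.sum_univ_three, fieldCoeff, hzero]

end Comparison

theorem field_norm_equivalence_general (A₀ M : ℝ) (hAM : -A₀ < M) (s : ℕ) (K : ℝ) (hK : 0 ≤ K) :
    ∃ C : ℝ, 0 < C ∧
      ∀ (ε : ℝ) (z0 s0 u : ℝ³ → ℝ), ContDiff ℝ ∞ z0 → ContDiff ℝ ∞ s0 → ContDiff ℝ ∞ u →
        (∀ p ∈ cell A₀ M, |ε * z0 p| ≤ K) → (∀ p ∈ cell A₀ M, |ε * s0 p| ≤ K) →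
          cellFieldSq A₀ M ε z0 s0 s u ≤
            C * (cellSobSq A₀ M s u + supCell A₀ M u ^ 2 *
              (cellSobSq A₀ M s (fun p => ε * z0 p) + cellSobSq A₀ M s (fun p => ε * s0 p))) ∧
          cellSobSq A₀ M s u ≤
            C * (cellFieldSq A₀ M ε z0 s0 s u + supCell A₀ M u ^ 2 *
              (cellSobSq A₀ M s (fun p => ε * z0 p) + cellSobSq A₀ M s (fun p => ε * s0 p))) := by
  obtain ⟨C₁, hC₁, hfield⟩ := exists_cellFieldSq_le hAM s hK
  obtain ⟨C₂, -, hsob⟩ := exists_cellSobSq_le hAM s hK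
  refine ⟨max C₁ C₂, lt_max_of_lt_left hC₁, fun ε z0 s0 u hz0 hs0 hu hz0K hs0K => ?_⟩
  have hc : ∀ i, ContDiff ℝ ∞ (fieldCoeff ε z0 s0 i) := Fin.forall_fin_succ.2
    ⟨contDiff_const.mul hz0, Fin.forall_fin_two.2 ⟨contDiff_const.mul hs0, contDiff_const⟩⟩
  have hcK : ∀ i, ∀ p ∈ cell A₀ M, |fieldCoeff ε z0 s0 i p| ≤ K := Fin.forall_fin_succ.2
    ⟨hz0K, Fin.forall_fin_two.2 ⟨hs0K, fun p _ => by simpa [fieldCoeff] using hK⟩⟩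
  have hT := tameRemainder_nonneg (A₀ := A₀) (M := M) s (fieldCoeff ε z0 s0) u
  rw [← tameRemainder_fieldCoeff]
  exact ⟨(hfield ε z0 s0 u hc hcK hu).trans (mul_le_mul_of_nonneg_right (le_max_left _ _)
      (add_nonneg (cellSobSq_nonneg s u) hT)),
    (hsob ε z0 s0 u hc hcK hu).trans (mul_le_mul_of_nonneg_right (le_max_right _ _)
      (add_nonneg (cellFieldSq_nonneg ε z0 s0 s u) hT))⟩

lemma C1Bound.abs_mul_le {A₀ M K ε : ℝ} {f : ℝ³ → ℝ} (hf : C1Bound A₀ M K f) (hε : 0 ≤ ε)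
    (hε1 : ε ≤ 1) {p : ℝ³} (hp : p ∈ cell A₀ M) : |ε * f p| ≤ K := by
  rw [abs_mul, abs_of_nonneg hε]
  exact (mul_le_of_le_one_left (abs_nonneg _) hε1).trans (hf p ⟨hp.1, hp.2.2⟩).1

/-- **Proposition IV.3.1** (equivalence of the standard Sobolev norm and the field norm):
with tame dependence on `‖ε z₀‖_s`, `‖ε s₀‖_s`. -/
theorem field_norm_equivalence (A₀ M : ℝ) (hAM : -A₀ < M) (s : ℕ) (K : ℝ) (hK : 0 < K) :
    ∃ C : ℝ, 0 < C ∧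
      ∀ ε : ℝ, 0 < ε → ε ≤ 1 →
        ∀ z0 s0 u : ℝ × ℝ × ℝ → ℝ,
          ContDiff ℝ (⊤ : ℕ∞) z0 → ContDiff ℝ (⊤ : ℕ∞) s0 → ContDiff ℝ (⊤ : ℕ∞) u →
          PerY z0 → PerY s0 → PerY u →
          C1Bound A₀ M K z0 → C1Bound A₀ M K s0 →
          cellFieldSq A₀ M ε z0 s0 s u ≤
            C * (cellSobSq A₀ M s u + (supCell A₀ M u) ^ 2 *
              (1 + cellSobSq A₀ M s (fun p => ε * z0 p) +
                cellSobSq A₀ M s (fun p => ε * s0 p))) ∧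
          cellSobSq A₀ M s u ≤
            C * (cellFieldSq A₀ M ε z0 s0 s u + (supCell A₀ M u) ^ 2 *
              (1 + cellSobSq A₀ M s (fun p => ε * z0 p) +
                cellSobSq A₀ M s (fun p => ε * s0 p))) := by
  obtain ⟨C, hC, hle⟩ := field_norm_equivalence_general A₀ M hAM s K hK.le
  refine ⟨C, hC, fun ε hε hε1 z0 s0 u hz0 hs0 hu _ _ _ hz0K hs0K => ?_⟩
  obtain ⟨hfield, hsob⟩ := hle ε z0 s0 u hz0 hs0 hu
    (fun p hp => hz0K.abs_mul_le hε.le hε1 hp) (fun p hp => hs0K.abs_mul_le hε.le hε1 hp)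
  constructor
  · refine hfield.trans ?_
    gcongr
    linarith
  · refine hsob.trans ?_
    gcongr
    linarith

end
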